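/- Let 0<p≤1 and let Y be a regular complex Banach space. (i) The map S_e sending each monomial z↦x z^n (n∈ℕ₀, x∈Y) to the trigonometric monomial t↦x cos(2πnt) extends to an isomorphism from H_p(𝔻,Y) onto H_{p,e}(𝕋,Y). (ii) The map S_o sending each monomial z↦x z^n (n∈ℕ, x∈Y) to t↦x sin(2πnt) extends to an isomorphism from H_{p,0}(𝔻,Y) onto H_{p,o}(𝕋,Y). -/

import Mathlib

/-!
Statement 11: Let `0 < p ≤ 1` and let `Y` be a regular complex Banach space.
(i) The map `S_e` sending each monomial `z ↦ x z^n` (`n ∈ ℕ₀`, `x ∈ Y`) to the trigonometric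
monomial `t ↦ x cos(2πnt)` extends to an isomorphism from `H_p(𝔻,Y)` onto `H_{p,e}(𝕋,Y)`.
(ii) The map `S_o` sending each monomial `z ↦ x z^n` (`n ∈ ℕ`) to `t ↦ x sin(2πnt)` extends
to an isomorphism from `H_{p,0}(𝔻,Y)` onto `H_{p,o}(𝕋,Y)`.

Regularity of `Y` is axiomatized by a bounded real-linear embedding of a real Banach space
`X` with bounded real-linear projections realizing `Y` as (a space isomorphic to) `X^ℂ`.
-/

noncomputable section
open Filter Topology MeasureTheory ENNReal

def I₀ : Set ℝ := Set.Ico (-(1 : ℝ)/2) (1/2)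

def circlePt (r t : ℝ) : ℂ := (r : ℂ) * Complex.exp (2 * Real.pi * t * Complex.I)

def poissonP (r t : ℝ) : ℝ :=
  (((1 : ℂ) + circlePt r t) / ((1 : ℂ) - circlePt r t)).re

def poissonQ (r t : ℝ) : ℝ :=
  (((1 : ℂ) + circlePt r t) / ((1 : ℂ) - circlePt r t)).im

def Smooth1PeriodicC (g : ℝ → ℂ) : Prop := ContDiff ℝ (⊤ : ℕ∞) g ∧ ∀ t, g (t + 1) = g t

def testSeminormC (i : ℕ) (g : ℝ → ℂ) : ℝ :=
  ⨆ t : Set.Icc (0 : ℝ) 1, ‖iteratedDeriv i g t‖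

def IsPeriodicDistributionC {Y : Type*} [NormedAddCommGroup Y] [NormedSpace ℂ Y]
    (u : (ℝ → ℂ) → Y) : Prop :=
  (∀ g h, Smooth1PeriodicC g → Smooth1PeriodicC h → u (g + h) = u g + u h) ∧
  (∀ (c : ℂ) (g), Smooth1PeriodicC g → u (c • g) = c • u g) ∧
  ∃ (k : ℕ) (C : ℝ), ∀ g, Smooth1PeriodicC g →
    ‖u g‖ ≤ C * ∑ i ∈ Finset.range (k + 1), testSeminormC i g

def pConvC {Y : Type*} (u : (ℝ → ℂ) → Y) (r t : ℝ) : Y :=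
  u (fun s => (poissonP r (t - s) : ℂ))

def qConvC {Y : Type*} (u : (ℝ → ℂ) → Y) (r t : ℝ) : Y :=
  u (fun s => (poissonQ r (t - s) : ℂ))

def qHpT {Y : Type*} [NormedAddCommGroup Y] (p : ℝ) (u : (ℝ → ℂ) → Y) : ℝ≥0∞ :=
  ⨆ r : Set.Ico (0 : ℝ) 1,
    (∫⁻ t in I₀, ((‖pConvC u r.1 t‖₊ : ℝ≥0∞) ^ p + (‖qConvC u r.1 t‖₊ : ℝ≥0∞) ^ p)) ^ (1/p)

def memHpT {Y : Type*} [NormedAddCommGroup Y] [NormedSpace ℂ Y] (p : ℝ)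
    (u : (ℝ → ℂ) → Y) : Prop :=
  IsPeriodicDistributionC u ∧ qHpT p u < ⊤

def hpIntegral {Y : Type*} [NormedAddCommGroup Y] (p : ℝ) (F : ℂ → Y) (r : ℝ) : ℝ≥0∞ :=
  ∫⁻ t in I₀, (‖F (circlePt r t)‖₊ : ℝ≥0∞) ^ p

def memHpD {Y : Type*} [NormedAddCommGroup Y] [NormedSpace ℂ Y] (p : ℝ) (F : ℂ → Y) : Prop :=
  DifferentiableOn ℂ F (Metric.ball 0 1) ∧
  ∃ B : ℝ≥0∞, B < ⊤ ∧ ∀ r : ℝ, 0 ≤ r → r < 1 → hpIntegral p F r ≤ B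

def qHpD {Y : Type*} [NormedAddCommGroup Y] (p : ℝ) (F : ℂ → Y) : ℝ≥0∞ :=
  ⨆ r : Set.Ico (0 : ℝ) 1, (hpIntegral p F r.1) ^ (1/p)

/-- An even distribution on the circle. -/
def IsEvenDistr {Y : Type*} [NormedAddCommGroup Y] [NormedSpace ℂ Y]
    (u : (ℝ → ℂ) → Y) : Prop :=
  ∀ g, Smooth1PeriodicC g → u (fun t => g (-t)) = u g

/-- An odd distribution on the circle. -/
def IsOddDistr {Y : Type*} [NormedAddCommGroup Y] [NormedSpace ℂ Y]
    (u : (ℝ → ℂ) → Y) : Prop :=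
  ∀ g, Smooth1PeriodicC g → u (fun t => g (-t)) = -u g


/-! ### Smooth periodic functions and their Fourier coefficients -/

/-- The exponentials on the circle. -/
def csE (n : ℤ) (t : ℝ) : ℂ := Complex.exp (2 * Real.pi * n * t * Complex.I)

/-- Fourier-type coefficients. -/
def csc (g : ℝ → ℂ) (n : ℤ) : ℂ := ∫ t in I₀, g t * csE n t

theorem cs_setInt {E : Type*} [NormedAddCommGroup E] [NormedSpace ℝ E] (f : ℝ → E) :
    ∫ t in I₀, f t = ∫ t in (-(1:ℝ)/2)..(1/2), f t := by
  rw [intervalIntegral.integral_of_le (by norm_num), I₀]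
  exact MeasureTheory.setIntegral_congr_set Ico_ae_eq_Ioc

theorem cs_vol : volume I₀ = 1 := by
  rw [I₀, Real.volume_Ico]; norm_num

theorem csE_add (n m : ℤ) (t : ℝ) : csE (n + m) t = csE n t * csE m t := by
  simp only [csE, ← Complex.exp_add]; congr 1; push_cast; ring

theorem csE_zero (t : ℝ) : csE 0 t = 1 := by simp [csE]

theorem csE_neg (n : ℤ) (t : ℝ) : csE n (-t) = csE (-n) t := by
  simp only [csE]; congr 1; push_cast; ring

theorem csE_periodic (n : ℤ) (t : ℝ) : csE n (t + 1) = csE n t := by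
  simp only [csE]
  rw [Complex.exp_eq_exp_iff_exists_int]
  exact ⟨n, by push_cast; ring⟩

theorem csE_norm (n : ℤ) (t : ℝ) : ‖csE n t‖ = 1 := by
  have : (2 * Real.pi * n * t * Complex.I : ℂ) = ((2 * Real.pi * n * t : ℝ) : ℂ) * Complex.I := by
    push_cast; ring
  rw [csE, this, Complex.norm_exp_ofReal_mul_I]

theorem csE_hasDeriv (n : ℤ) (t : ℝ) :
    HasDerivAt (csE n) ((2 * Real.pi * n * Complex.I) * csE n t) t := by
  have h1 : HasDerivAt (fun z : ℂ => Complex.exp (2 * Real.pi * n * z * Complex.I))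
      (Complex.exp (2 * Real.pi * n * (t:ℂ) * Complex.I) * (2 * Real.pi * n * 1 * Complex.I)) (t:ℂ) :=
    (((hasDerivAt_id (t:ℂ)).const_mul (2 * Real.pi * n : ℂ)).mul_const Complex.I).cexp
  have h2 := h1.comp_ofReal
  refine h2.congr_deriv ?_
  rw [csE]; ring

theorem csE_contDiff (n : ℤ) : ContDiff ℝ (⊤ : ℕ∞) (csE n) := by
  unfold csE
  have : ContDiff ℝ (⊤ : ℕ∞) (fun t : ℝ => (t : ℂ)) := Complex.ofRealCLM.contDiff
  fun_prop

theorem csE_smooth (n : ℤ) : Smooth1PeriodicC (csE n) := ⟨csE_contDiff n, csE_periodic n⟩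

theorem csE_cont (n : ℤ) : Continuous (csE n) := (csE_contDiff n).continuous

theorem cs_deriv_smooth {g : ℝ → ℂ} (hg : Smooth1PeriodicC g) : Smooth1PeriodicC (deriv g) := by
  refine ⟨(contDiff_infty_iff_deriv.1 hg.1).2, fun t => ?_⟩
  rw [← deriv_comp_add_const]
  congr 1
  funext s
  exact hg.2 s

theorem cs_iter_smooth {g : ℝ → ℂ} (hg : Smooth1PeriodicC g) (i : ℕ) :
    Smooth1PeriodicC (iteratedDeriv i g) := by
  induction i with
  | zero => simpa using hg
  | succ k ih => rw [iteratedDeriv_succ]; exact cs_deriv_smooth ih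

theorem cs_smooth_add {g h : ℝ → ℂ} (hg : Smooth1PeriodicC g) (hh : Smooth1PeriodicC h) :
    Smooth1PeriodicC (g + h) :=
  ⟨hg.1.add hh.1, fun t => by simp [hg.2, hh.2]⟩

theorem cs_smooth_smul {g : ℝ → ℂ} (c : ℂ) (hg : Smooth1PeriodicC g) :
    Smooth1PeriodicC (c • g) :=
  ⟨contDiff_const.smul hg.1, fun t => by simp [hg.2]⟩

theorem cs_smooth_neg {g : ℝ → ℂ} (hg : Smooth1PeriodicC g) :
    Smooth1PeriodicC (fun t => g (-t)) := by
  refine ⟨hg.1.comp contDiff_neg, fun t => ?_⟩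
  show g (-(t+1)) = g (-t)
  rw [← hg.2 (-(t+1))]; congr 1; ring

theorem cs_smooth_zero : Smooth1PeriodicC 0 :=
  ⟨contDiff_const, fun t => by simp⟩

theorem cs_smooth_sum {α : Type*} (s : Finset α) (f : α → ℝ → ℂ)
    (hf : ∀ i, Smooth1PeriodicC (f i)) : Smooth1PeriodicC (∑ i ∈ s, f i) := by
  classical
  induction s using Finset.induction_on with
  | empty => simpa using cs_smooth_zero
  | insert a s ha ih => rw [Finset.sum_insert ha]; exact cs_smooth_add (hf a) ih

theorem cs_le_seminorm {g : ℝ → ℂ} (hg : Smooth1PeriodicC g) (i : ℕ) (t : ℝ) :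
    ‖iteratedDeriv i g t‖ ≤ testSeminormC i g := by
  have hs := cs_iter_smooth hg i
  obtain ⟨y, hy, hty⟩ := Function.Periodic.exists_mem_Ico₀ (f := iteratedDeriv i g) (c := (1:ℝ))
    hs.2 one_pos t
  rw [hty]
  have hb : BddAbove (Set.range fun t : Set.Icc (0:ℝ) 1 => ‖iteratedDeriv i g t‖) := by
    have := (isCompact_Icc (a := (0:ℝ)) (b := 1)).bddAbove_image
      (f := fun t => ‖iteratedDeriv i g t‖) hs.1.continuous.norm.continuousOn
    rwa [Set.image_eq_range] at this
  exact le_ciSup hb ⟨y, hy.1, hy.2.le⟩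

theorem cs_seminorm_nonneg (i : ℕ) (g : ℝ → ℂ) : 0 ≤ testSeminormC i g :=
  Real.iSup_nonneg fun _ => norm_nonneg _

theorem cs_seminorm_le {g : ℝ → ℂ} (i : ℕ) (C : ℝ) (h : ∀ t, ‖iteratedDeriv i g t‖ ≤ C) :
    testSeminormC i g ≤ C := by
  have : Nonempty (Set.Icc (0:ℝ) 1) := ⟨⟨0, by simp⟩⟩
  exact ciSup_le fun t => h t

theorem cs_intble {g : ℝ → ℂ} (hg : Continuous g) : IntegrableOn g I₀ :=
  (hg.integrableOn_Icc (a := -(1:ℝ)/2) (b := 1/2)).mono_set Set.Ico_subset_Icc_self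

theorem csc_add {g h : ℝ → ℂ} (hg : Continuous g) (hh : Continuous h) (n : ℤ) :
    csc (g + h) n = csc g n + csc h n := by
  simp only [csc, Pi.add_apply, add_mul]
  exact integral_add (cs_intble (hg.mul (csE_cont n))) (cs_intble (hh.mul (csE_cont n)))

theorem csc_smul (c : ℂ) (g : ℝ → ℂ) (n : ℤ) : csc (c • g) n = c * csc g n := by
  simp only [csc, Pi.smul_apply, smul_eq_mul, mul_assoc]
  exact integral_const_mul _ _

theorem csc_neg (g : ℝ → ℂ) (n : ℤ) : csc (fun t => g (-t)) n = csc g (-n) := by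
  simp only [csc, cs_setInt]
  have := intervalIntegral.integral_comp_neg (a := -(1:ℝ)/2) (b := 1/2)
    (fun t => g t * csE (-n) t)
  rw [show -(-(1:ℝ)/2) = 1/2 by norm_num, show -((1:ℝ)/2) = -1/2 by norm_num] at this
  rw [← this]
  congr 1
  funext t
  rw [csE_neg, neg_neg]

theorem csc_norm_le {g : ℝ → ℂ} (n : ℤ) (C : ℝ) (h : ∀ t, ‖g t‖ ≤ C) : ‖csc g n‖ ≤ C := by
  have := norm_setIntegral_le_of_norm_le_const (μ := volume) (s := I₀) (C := C)
    (f := fun t => g t * csE n t) (by simp [cs_vol])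
    (fun t _ => by rw [norm_mul, csE_norm, mul_one]; exact h t)
  rw [csc]
  simpa [Measure.real, cs_vol] using this

theorem csc_deriv {g : ℝ → ℂ} (hg : Smooth1PeriodicC g) (n : ℤ) :
    csc (deriv g) n = -(2 * Real.pi * n * Complex.I) * csc g n := by
  have hd : ∀ x, HasDerivAt g (deriv g x) x := fun x =>
    ((contDiff_infty_iff_deriv.1 hg.1).1 x).hasDerivAt
  have h := intervalIntegral.integral_deriv_mul_eq_sub_of_hasDerivAt (a := -(1:ℝ)/2) (b := 1/2)
    (u := g) (v := csE n) (u' := deriv g) (v' := fun t => (2 * Real.pi * n * Complex.I) * csE n t)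
    (fun x _ => (hd x).continuousAt.continuousWithinAt)
    (fun x _ => (csE_hasDeriv n x).continuousAt.continuousWithinAt)
    (fun x _ => hd x) (fun x _ => csE_hasDeriv n x)
    ((cs_deriv_smooth hg).1.continuous.intervalIntegrable _ _)
    (((csE_cont n).const_smul (2 * Real.pi * n * Complex.I : ℂ)).intervalIntegrable _ _)
  have e1 : g (1/2) = g (-1/2) := by rw [← hg.2 (-1/2)]; norm_num
  have e2 : csE n (1/2) = csE n (-1/2) := by rw [← csE_periodic n (-1/2)]; norm_num
  rw [e1, e2, sub_self, intervalIntegral.integral_add] at h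
  · simp only [csc, cs_setInt]
    have h3 : ∀ x, g x * ((2 * Real.pi * n * Complex.I) * csE n x) =
      (2 * Real.pi * n * Complex.I) * (g x * csE n x) := fun x => by ring
    simp only [h3] at h
    rw [intervalIntegral.integral_const_mul] at h
    linear_combination h
  · exact ((cs_deriv_smooth hg).1.continuous.mul (csE_cont n)).intervalIntegrable _ _
  · exact (hg.1.continuous.mul
      ((csE_cont n).const_smul (2 * Real.pi * n * Complex.I : ℂ))).intervalIntegrable _ _

theorem csc_iter {g : ℝ → ℂ} (hg : Smooth1PeriodicC g) (n : ℤ) (i : ℕ) :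
    csc (iteratedDeriv i g) n = (-(2 * Real.pi * n * Complex.I)) ^ i * csc g n := by
  induction i with
  | zero => simp
  | succ k ih => rw [iteratedDeriv_succ, csc_deriv (cs_iter_smooth hg k), ih]; ring

theorem csc_pow_le {g : ℝ → ℂ} (hg : Smooth1PeriodicC g) (n : ℤ) (i : ℕ) :
    |(n:ℝ)| ^ i * ‖csc g n‖ ≤ testSeminormC i g := by
  have h1 : ‖csc (iteratedDeriv i g) n‖ ≤ testSeminormC i g :=
    csc_norm_le n _ (cs_le_seminorm hg i)
  rw [csc_iter hg, norm_mul, norm_pow] at h1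
  refine le_trans ?_ h1
  gcongr
  simp only [norm_neg, norm_mul, Complex.norm_I, mul_one, Complex.norm_real, Complex.norm_intCast]
  have : (1:ℝ) ≤ ‖(2:ℂ)‖ * ‖Real.pi‖ := by
    rw [Real.norm_of_nonneg Real.pi_pos.le]; norm_num
    linarith [Real.pi_gt_three]
  nlinarith [abs_nonneg (n:ℝ)]

theorem csc_decay {g : ℝ → ℂ} (hg : Smooth1PeriodicC g) (n : ℤ) (m : ℕ) :
    (|(n:ℝ)| + 1) ^ m * ‖csc g n‖ ≤ 2 ^ m * ∑ i ∈ Finset.range (m + 1), testSeminormC i g := by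
  have h0 := csc_pow_le hg n 0
  have hm := csc_pow_le hg n m
  have hle : ∀ j ∈ Finset.range (m+1), testSeminormC j g ≤
      ∑ i ∈ Finset.range (m + 1), testSeminormC i g := fun j hj =>
    Finset.single_le_sum (f := fun i => testSeminormC i g) (fun i _ => cs_seminorm_nonneg i g) hj
  have h0' := h0.trans (hle 0 (by simp))
  have hm' := hm.trans (hle m (by simp))
  rcases le_total (|(n:ℝ)|) 1 with h | h
  · calc (|(n:ℝ)| + 1) ^ m * ‖csc g n‖ ≤ 2 ^ m * ‖csc g n‖ := by gcongr; linarith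
      _ ≤ _ := by gcongr; simpa using h0'
  · calc (|(n:ℝ)| + 1) ^ m * ‖csc g n‖ ≤ (2 * |(n:ℝ)|) ^ m * ‖csc g n‖ := by gcongr; linarith
      _ = 2 ^ m * (|(n:ℝ)| ^ m * ‖csc g n‖) := by ring
      _ ≤ _ := by gcongr

theorem cs_summable_int {g : ℝ → ℂ} (hg : Smooth1PeriodicC g) :
    Summable (fun n : ℤ => csc g n) := by
  have hs : Summable (fun n : ℤ => 1 / (n:ℝ) ^ 2) := Real.summable_one_div_int_pow.2 (by norm_num)
  refine Summable.of_norm_bounded_eventually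
    (g := fun n : ℤ => (testSeminormC 2 g) * (1 / (n:ℝ)^2)) (hs.mul_left _) ?_
  filter_upwards [(Set.finite_singleton (0:ℤ)).compl_mem_cofinite] with n hn
  have hn' : (n:ℝ) ≠ 0 := by simpa using hn
  have := csc_pow_le hg n 2
  rw [sq_abs] at this
  rw [mul_one_div, le_div_iff₀ (by positivity)]
  linarith

/-- Uniform convergence of the Fourier series. -/
theorem cs_fourier {g : ℝ → ℂ} (hg : Smooth1PeriodicC g) {ε : ℝ} (hε : 0 < ε) :
    ∀ᶠ s : Finset ℤ in atTop, ∀ t, ‖(∑ n ∈ s, csc g (-n) * csE n t) - g t‖ ≤ ε := by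
  have : Fact (0 < (1:ℝ)) := ⟨one_pos⟩
  have hper : Function.Periodic g 1 := hg.2
  let G : C(AddCircle (1:ℝ), ℂ) :=
    ⟨hper.lift, continuous_coinduced_dom.mpr (by exact hg.1.continuous)⟩
  have hG : ∀ t : ℝ, G (t : AddCircle (1:ℝ)) = g t := fun t => hper.lift_coe t
  have hE : ∀ (n : ℤ) (t : ℝ), fourier n (t : AddCircle (1:ℝ)) = csE n t := fun n t => by
    rw [fourier_coe_apply, csE]; congr 1; push_cast; ring
  have hco : ∀ n, fourierCoeff G n = csc g (-n) := fun n => by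
    rw [fourierCoeff_eq_intervalIntegral _ _ (-(1:ℝ)/2), csc, cs_setInt]
    rw [show -(1:ℝ)/2 + 1 = 1/2 by norm_num, one_div_one, one_smul]
    congr 1
    funext t
    rw [hE, hG, smul_eq_mul, mul_comm]
  have hsum : Summable (fourierCoeff G) := by
    have : fourierCoeff G = (fun n => csc g n) ∘ (Equiv.neg ℤ) := by
      funext n; rw [hco]; rfl
    rw [this, Equiv.summable_iff]
    exact cs_summable_int hg
  have h := hasSum_fourier_series_of_summable hsum
  have h2 := (Metric.tendsto_nhds.1 h) ε hε
  filter_upwards [h2] with s hs t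
  have h3 := (ContinuousMap.norm_coe_le_norm
    ((∑ i ∈ s, fourierCoeff G i • (fourier i : C(AddCircle (1:ℝ), ℂ))) - G) (t : AddCircle (1:ℝ)))
  rw [dist_eq_norm] at hs
  refine le_trans (le_of_eq ?_) (h3.trans hs.le)
  congr 1
  rw [ContinuousMap.sub_apply, hG, ContinuousMap.sum_apply]
  congr 1
  refine Finset.sum_congr rfl fun n _ => ?_
  rw [ContinuousMap.smul_apply, hE, hco, smul_eq_mul]


/-! ### Fourier expansion of distributions -/

section distr
variable {Y : Type*} [NormedAddCommGroup Y] [NormedSpace ℂ Y]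

theorem cs_distr_sum {u : (ℝ → ℂ) → Y} (hu : IsPeriodicDistributionC u) (s : Finset ℤ)
    (c : ℤ → ℂ) : u (∑ n ∈ s, c n • csE n) = ∑ n ∈ s, c n • u (csE n) := by
  classical
  induction s using Finset.induction_on with
  | empty =>
    have := hu.2.1 0 0 cs_smooth_zero
    simpa using this
  | insert a s ha ih =>
    rw [Finset.sum_insert ha, Finset.sum_insert ha, hu.1 _ _ (cs_smooth_smul _ (csE_smooth a))
      (cs_smooth_sum s _ fun i => cs_smooth_smul _ (csE_smooth i)), ih, hu.2.1 _ _ (csE_smooth a)]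

/-- Error of the partial Fourier sum. -/
def csD (s : Finset ℤ) (g : ℝ → ℂ) : ℝ → ℂ := fun t => (∑ n ∈ s, csc g (-n) * csE n t) - g t

theorem csD_eq (s : Finset ℤ) (g : ℝ → ℂ) :
    csD s g = (∑ n ∈ s, csc g (-n) • csE n) + (-1 : ℂ) • g := by
  funext t
  simp [csD, sub_eq_add_neg]

theorem csD_smooth (s : Finset ℤ) {g : ℝ → ℂ} (hg : Smooth1PeriodicC g) :
    Smooth1PeriodicC (csD s g) := by
  rw [csD_eq]
  exact cs_smooth_add (cs_smooth_sum s _ fun i => cs_smooth_smul _ (csE_smooth i))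
    (cs_smooth_smul _ hg)

theorem csD_deriv (s : Finset ℤ) {g : ℝ → ℂ} (hg : Smooth1PeriodicC g) :
    deriv (csD s g) = csD s (deriv g) := by
  funext t
  have hd : HasDerivAt g (deriv g t) t := ((contDiff_infty_iff_deriv.1 hg.1).1 t).hasDerivAt
  have h1 : HasDerivAt (fun t => ∑ n ∈ s, csc g (-n) * csE n t)
      (∑ n ∈ s, csc g (-n) * ((2 * Real.pi * n * Complex.I) * csE n t)) t :=
    HasDerivAt.fun_sum fun n _ => (csE_hasDeriv n t).const_mul _
  refine (h1.sub hd).deriv.trans ?_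
  simp only [csD]
  congr 1
  refine Finset.sum_congr rfl fun n _ => ?_
  rw [csc_deriv hg]; push_cast; ring

theorem csD_iter (s : Finset ℤ) {g : ℝ → ℂ} (hg : Smooth1PeriodicC g) (i : ℕ) :
    iteratedDeriv i (csD s g) = csD s (iteratedDeriv i g) := by
  induction i with
  | zero => simp
  | succ k ih => rw [iteratedDeriv_succ, ih, csD_deriv s (cs_iter_smooth hg k), iteratedDeriv_succ]

theorem cs_distr_hasSum {u : (ℝ → ℂ) → Y} (hu : IsPeriodicDistributionC u) {g : ℝ → ℂ}
    (hg : Smooth1PeriodicC g) : HasSum (fun n : ℤ => csc g (-n) • u (csE n)) (u g) := by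
  obtain ⟨k, C, hC⟩ := hu.2.2
  have hkey : ∀ s : Finset ℤ, (∑ n ∈ s, csc g (-n) • u (csE n)) - u g = u (csD s g) := by
    intro s
    rw [csD_eq, hu.1 _ _ (cs_smooth_sum s _ fun i => cs_smooth_smul _ (csE_smooth i))
      (cs_smooth_smul _ hg), cs_distr_sum hu s (fun n => csc g (-n)), hu.2.1 _ _ hg]
    simp [sub_eq_add_neg]
  have hbd : ∀ ε > 0, ∀ᶠ s : Finset ℤ in atTop,
      ∀ i ∈ Finset.range (k+1), testSeminormC i (csD s g) ≤ ε := by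
    intro ε hε
    rw [Filter.eventually_all_finset]
    intro i _
    filter_upwards [cs_fourier (cs_iter_smooth hg i) hε] with s hs
    refine cs_seminorm_le i ε fun t => ?_
    rw [csD_iter s hg]
    exact hs t
  show Tendsto (fun s : Finset ℤ => ∑ n ∈ s, csc g (-n) • u (csE n)) atTop (𝓝 (u g))
  rw [Metric.tendsto_nhds]
  intro ε hε
  have hδ : 0 < ε / (2 * ((|C| + 1) * (k + 1))) := by positivity
  filter_upwards [hbd _ hδ] with s hs
  rw [dist_eq_norm, hkey]
  have hsum : ∑ i ∈ Finset.range (k+1), testSeminormC i (csD s g) ≤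
      (k+1) * (ε / (2 * ((|C| + 1) * (k + 1)))) := by
    refine (Finset.sum_le_card_nsmul _ _ _ hs).trans ?_
    simp
  have h0 : 0 ≤ ∑ i ∈ Finset.range (k+1), testSeminormC i (csD s g) :=
    Finset.sum_nonneg fun i _ => cs_seminorm_nonneg i _
  calc ‖u (csD s g)‖ ≤ C * ∑ i ∈ Finset.range (k+1), testSeminormC i (csD s g) :=
        hC _ (csD_smooth s hg)
    _ ≤ (|C| + 1) * ((k+1) * (ε / (2 * ((|C| + 1) * (k + 1))))) := by
        gcongr
        linarith [le_abs_self C]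
    _ = ε / 2 := by field_simp
    _ < ε := by linarith

theorem csE_iter (n : ℤ) (i : ℕ) :
    iteratedDeriv i (csE n) = fun t => (2 * Real.pi * n * Complex.I) ^ i * csE n t := by
  induction i with
  | zero => simp
  | succ k ih =>
    rw [iteratedDeriv_succ, ih]
    funext t
    refine ((csE_hasDeriv n t).const_mul _).deriv.trans ?_
    ring

theorem cs_distr_bound {u : (ℝ → ℂ) → Y} (hu : IsPeriodicDistributionC u) :
    ∃ (k : ℕ) (C : ℝ), ∀ n : ℕ, ‖u (csE n)‖ ≤ C * ((n:ℝ) + 1) ^ k := by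
  obtain ⟨k, C, hC⟩ := hu.2.2
  refine ⟨k, |C| * ((k + 1) * (2 * Real.pi + 1) ^ k), fun n => ?_⟩
  have hs : ∀ i ∈ Finset.range (k+1), testSeminormC i (csE n) ≤
      (2 * Real.pi + 1) ^ k * ((n:ℝ) + 1) ^ k := by
    intro i hi
    refine cs_seminorm_le i _ fun t => ?_
    rw [csE_iter]
    simp only [norm_mul, norm_pow, csE_norm, Complex.norm_I, mul_one, Complex.norm_real,
      Int.cast_natCast, Complex.norm_natCast, Real.norm_of_nonneg Real.pi_pos.le, Complex.norm_ofNat]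
    rw [← mul_pow]
    have hpi := Real.pi_pos
    have hn : (0:ℝ) ≤ n := Nat.cast_nonneg n
    calc (2 * Real.pi * n) ^ i ≤ ((2 * Real.pi + 1) * (n + 1)) ^ i := by
          gcongr <;> linarith
      _ ≤ _ := by
          apply pow_le_pow_right₀
          · nlinarith
          · simpa [Nat.lt_succ_iff] using hi
  have hsum := Finset.sum_le_card_nsmul _ _ _ hs
  have h0 : 0 ≤ ∑ i ∈ Finset.range (k+1), testSeminormC i (csE n) :=
    Finset.sum_nonneg fun i _ => cs_seminorm_nonneg i _
  calc ‖u (csE n)‖ ≤ C * ∑ i ∈ Finset.range (k+1), testSeminormC i (csE n) := hC _ (csE_smooth n)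
    _ ≤ |C| * ∑ i ∈ Finset.range (k+1), testSeminormC i (csE n) := by
        gcongr; exact le_abs_self C
    _ ≤ |C| * ((k+1) * ((2 * Real.pi + 1) ^ k * ((n:ℝ) + 1) ^ k)) := by
        gcongr
        refine hsum.trans (le_of_eq ?_)
        simp
    _ = _ := by ring

end distr

/-! ### The Poisson kernels -/

/-- The analytic kernel. -/
def csK (r t s : ℝ) : ℂ := (1 + circlePt r (t - s)) / (1 - circlePt r (t - s))

theorem circlePt_eq (r t : ℝ) : circlePt r t = r * csE 1 t := by
  simp [circlePt, csE]

theorem csE_nat (n : ℕ) (t : ℝ) : csE n t = csE 1 t ^ n := by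
  rw [csE, csE, ← Complex.exp_nat_mul]; congr 1; push_cast; ring

theorem circlePt_norm {r : ℝ} (hr : 0 ≤ r) (t : ℝ) : ‖circlePt r t‖ = r := by
  rw [circlePt_eq, norm_mul, csE_norm, Complex.norm_real, mul_one, Real.norm_of_nonneg hr]

theorem circlePt_pow (r t : ℝ) (n : ℕ) : circlePt r t ^ n = r ^ n * csE n t := by
  rw [circlePt_eq, mul_pow, csE_nat]

theorem circlePt_ne {r : ℝ} (hr : 0 ≤ r) (hr1 : r < 1) (t : ℝ) : 1 - circlePt r t ≠ 0 := by
  intro h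
  have : circlePt r t = 1 := (sub_eq_zero.1 h).symm
  have h2 := circlePt_norm hr t
  rw [this, norm_one] at h2
  linarith

theorem csK_smooth {r : ℝ} (hr : 0 ≤ r) (hr1 : r < 1) (t : ℝ) : Smooth1PeriodicC (csK r t) := by
  have h1 : ContDiff ℝ (⊤ : ℕ∞) (fun s => circlePt r (t - s)) := by
    simp only [circlePt_eq]
    exact contDiff_const.mul ((csE_contDiff 1).comp (contDiff_const.sub contDiff_id))
  refine ⟨?_, fun s => ?_⟩
  · have h2 : csK r t = fun s => (1 + circlePt r (t - s)) * (1 - circlePt r (t - s))⁻¹ := by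
      funext s; rw [csK, div_eq_mul_inv]
    rw [h2]
    exact (contDiff_const.add h1).mul
      ((contDiff_const.sub h1).inv fun s => circlePt_ne hr hr1 _)
  have : circlePt r (t - (s + 1)) = circlePt r (t - s) := by
    rw [circlePt_eq, circlePt_eq, ← csE_periodic 1 (t - (s+1))]
    congr 2; ring
  simp only [csK, this]

/-- Coefficients of `(1+w)/(1-w)`. -/
def csκ (n : ℕ) : ℂ := if n = 0 then 1 else 2

theorem csκ_norm (n : ℕ) : ‖csκ n‖ ≤ 2 := by
  unfold csκ; split_ifs <;> simp

theorem csκ_hasSum {w : ℂ} (hw : ‖w‖ < 1) :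
    HasSum (fun n : ℕ => csκ n * w ^ n) ((1 + w) / (1 - w)) := by
  have hne : 1 - w ≠ 0 := by
    intro h
    rw [← sub_eq_zero.1 h, norm_one] at hw
    exact lt_irrefl _ hw
  have h1 := (hasSum_geometric_of_norm_lt_one hw).mul_left 2
  have h2 : HasSum (fun n : ℕ => if n = 0 then (-1 : ℂ) else 0) (-1) := hasSum_ite_eq 0 (-1)
  have h3 := h1.add h2
  have e1 : (fun n : ℕ => csκ n * w ^ n) =
      fun n : ℕ => 2 * w ^ n + if n = 0 then (-1 : ℂ) else 0 := by
    funext n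
    unfold csκ
    split_ifs with h
    · subst h; norm_num
    · ring
  have e2 : (1 + w) / (1 - w) = 2 * (1 - w)⁻¹ + -1 := by
    field_simp; ring
  rw [e1, e2]
  exact h3

theorem csc_E (m n : ℤ) : csc (csE m) n = if n = -m then 1 else 0 := by
  have h1 : csc (csE m) n = ∫ t in I₀, csE (m + n) t := by
    simp only [csc, csE_add]
  split_ifs with h
  · rw [h1, h]; simp [csE_zero, Measure.real, cs_vol]
  · have h2 := csc_deriv (csE_smooth m) n
    have h3 : deriv (csE m) = (2 * Real.pi * m * Complex.I : ℂ) • csE m := by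
      funext t; exact (csE_hasDeriv m t).deriv
    rw [h3, csc_smul] at h2
    have h4 : (2 * Real.pi * Complex.I : ℂ) * ((m + n : ℤ) : ℂ) * csc (csE m) n = 0 := by
      push_cast; linear_combination h2
    have h5 : ((m + n : ℤ) : ℂ) ≠ 0 := by
      rw [Int.cast_ne_zero]; omega
    rcases mul_eq_zero.1 h4 with h6 | h6
    · exact absurd h6 (mul_ne_zero Complex.two_pi_I_ne_zero h5)
    · exact h6

theorem csc_K {r : ℝ} (hr : 0 ≤ r) (hr1 : r < 1) (t : ℝ) (n : ℤ) :
    HasSum (fun m : ℕ => csκ m * r ^ m * csE m t * (if n = m then 1 else 0)) (csc (csK r t) n) := by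
  have hterm : ∀ (m : ℕ) (s : ℝ), csκ m * circlePt r (t - s) ^ m * csE n s =
      (csκ m * r ^ m * csE m t) * (csE (-m) s * csE n s) := by
    intro m s
    rw [circlePt_pow]
    have : csE m (t - s) = csE m t * csE (-m) s := by
      rw [← csE_neg, csE, csE, csE, ← Complex.exp_add]; congr 1; push_cast; ring
    rw [this]; ring
  have hI : ∀ m : ℕ, ∫ s in I₀, csκ m * circlePt r (t - s) ^ m * csE n s =
      csκ m * r ^ m * csE m t * (if n = m then 1 else 0) := by
    intro m
    simp only [hterm]
    rw [integral_const_mul]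
    have := csc_E (-m) n
    rw [neg_neg] at this
    rw [← this, csc]
  simp only [← hI]
  refine hasSum_integral_of_dominated_convergence (fun m _ => 2 * r ^ m) ?_ ?_ ?_ ?_ ?_
  · intro m
    simp only [hterm]
    exact (continuous_const.mul ((csE_cont _).mul (csE_cont _))).aestronglyMeasurable
  · intro m
    refine Eventually.of_forall fun s => ?_
    rw [norm_mul, norm_mul, csE_norm, norm_pow, circlePt_norm hr, mul_one]
    gcongr
    exact csκ_norm m
  · exact Eventually.of_forall fun s => (summable_geometric_of_lt_one hr hr1).mul_left 2
  · have : volume I₀ ≠ ⊤ := by simp [cs_vol]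
    exact integrableOn_const this
  · refine Eventually.of_forall fun s => ?_
    exact (csκ_hasSum (by rw [circlePt_norm hr]; exact hr1)).mul_right _

theorem csc_K_nat {r : ℝ} (hr : 0 ≤ r) (hr1 : r < 1) (t : ℝ) (n : ℕ) :
    csc (csK r t) n = csκ n * r ^ n * csE n t := by
  refine (csc_K hr hr1 t n).unique ?_
  convert hasSum_single n ?_ using 1
  · simp
  · intro m hm
    rw [if_neg, mul_zero]
    exact_mod_cast hm.symm

theorem csc_K_neg {r : ℝ} (hr : 0 ≤ r) (hr1 : r < 1) (t : ℝ) (n : ℕ) (hn : n ≠ 0) :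
    csc (csK r t) (-n) = 0 := by
  refine (csc_K hr hr1 t (-n)).unique ?_
  convert hasSum_zero using 2 with m
  rw [if_neg, mul_zero]
  omega

theorem csK_conj (r t s : ℝ) : csK r (-t) (-s) = (starRingEnd ℂ) (csK r t s) := by
  have : circlePt r (-t - -s) = (starRingEnd ℂ) (circlePt r (t - s)) := by
    rw [circlePt, circlePt, map_mul, Complex.conj_ofReal, ← Complex.exp_conj]
    congr 2
    simp only [map_mul, Complex.conj_ofReal, Complex.conj_I]
    rw [show (starRingEnd ℂ) 2 = 2 from Complex.conj_ofNat 2]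
    push_cast
    ring
  simp only [csK, this, map_div₀, map_add, map_sub, map_one]

theorem csP_eq (r t : ℝ) : (fun s => (poissonP r (t - s) : ℂ)) =
    (1/2 : ℂ) • (csK r t + fun s => csK r (-t) (-s)) := by
  funext s
  simp only [Pi.smul_apply, Pi.add_apply, csK_conj, smul_eq_mul]
  rw [Complex.add_conj, poissonP, csK]
  push_cast; ring

theorem csQ_eq (r t : ℝ) : (fun s => (poissonQ r (t - s) : ℂ)) =
    (-Complex.I/2 : ℂ) • (csK r t + (-1 : ℂ) • fun s => csK r (-t) (-s)) := by
  funext s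
  simp only [Pi.smul_apply, Pi.add_apply, csK_conj, smul_eq_mul]
  rw [neg_one_mul, ← sub_eq_add_neg, Complex.sub_conj, poissonQ, csK]
  push_cast
  ring_nf
  simp

section kern
variable {r : ℝ}

theorem csP_smooth (hr : 0 ≤ r) (hr1 : r < 1) (t : ℝ) : Smooth1PeriodicC (fun s => (poissonP r (t - s) : ℂ)) := by
  rw [csP_eq]
  exact cs_smooth_smul _ (cs_smooth_add (csK_smooth hr hr1 t)
    (cs_smooth_neg (csK_smooth hr hr1 (-t))))

theorem csQ_smooth (hr : 0 ≤ r) (hr1 : r < 1) (t : ℝ) : Smooth1PeriodicC (fun s => (poissonQ r (t - s) : ℂ)) := by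
  rw [csQ_eq]
  exact cs_smooth_smul _ (cs_smooth_add (csK_smooth hr hr1 t)
    (cs_smooth_smul _ (cs_smooth_neg (csK_smooth hr hr1 (-t)))))

theorem csc_P (hr : 0 ≤ r) (hr1 : r < 1) (t : ℝ) (n : ℤ) : csc (fun s => (poissonP r (t - s) : ℂ)) n =
    (1/2) * (csc (csK r t) n + csc (csK r (-t)) (-n)) := by
  rw [csP_eq, csc_smul, csc_add (csK_smooth hr hr1 t).1.continuous
    (cs_smooth_neg (csK_smooth hr hr1 (-t))).1.continuous, csc_neg]

theorem csc_Q (hr : 0 ≤ r) (hr1 : r < 1) (t : ℝ) (n : ℤ) : csc (fun s => (poissonQ r (t - s) : ℂ)) n =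
    (-Complex.I/2) * (csc (csK r t) n - csc (csK r (-t)) (-n)) := by
  rw [csQ_eq, csc_smul, csc_add (csK_smooth hr hr1 t).1.continuous
    (cs_smooth_smul _ (cs_smooth_neg (csK_smooth hr hr1 (-t)))).1.continuous, csc_smul, csc_neg]
  ring

theorem csc_P_nat (hr : 0 ≤ r) (hr1 : r < 1) (t : ℝ) (n : ℕ) : csc (fun s => (poissonP r (t - s) : ℂ)) n = circlePt r t ^ n := by
  rw [csc_P hr hr1, csc_K_nat hr hr1, circlePt_pow]
  rcases eq_or_ne n 0 with h | h
  · subst h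
    have := csc_K_nat hr hr1 (-t) 0
    simp only [Nat.cast_zero, neg_zero] at this ⊢
    rw [this]; simp [csκ, csE_zero]; norm_num
  · rw [csc_K_neg hr hr1 _ n h]; simp [csκ, h]; ring

theorem csc_P_neg (hr : 0 ≤ r) (hr1 : r < 1) (t : ℝ) (n : ℕ) :
    csc (fun s => (poissonP r (t - s) : ℂ)) (-n) = circlePt r (-t) ^ n := by
  rw [csc_P hr hr1, neg_neg, csc_K_nat hr hr1, circlePt_pow]
  rcases eq_or_ne n 0 with h | h
  · subst h
    have := csc_K_nat hr hr1 t 0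
    simp only [Nat.cast_zero, neg_zero] at this ⊢
    rw [this]; simp [csκ, csE_zero]; norm_num
  · rw [csc_K_neg hr hr1 _ n h]; simp [csκ, h]; ring

theorem csc_Q_nat (hr : 0 ≤ r) (hr1 : r < 1) (t : ℝ) (n : ℕ) : csc (fun s => (poissonQ r (t - s) : ℂ)) n =
    -Complex.I * (circlePt r t ^ n - if n = 0 then 1 else 0) := by
  rw [csc_Q hr hr1, csc_K_nat hr hr1, circlePt_pow]
  rcases eq_or_ne n 0 with h | h
  · subst h
    have := csc_K_nat hr hr1 (-t) 0
    simp only [Nat.cast_zero, neg_zero] at this ⊢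
    rw [this]; simp [csκ, csE_zero]
  · rw [csc_K_neg hr hr1 _ n h]; simp [csκ, h]; ring

theorem csc_Q_neg (hr : 0 ≤ r) (hr1 : r < 1) (t : ℝ) (n : ℕ) : csc (fun s => (poissonQ r (t - s) : ℂ)) (-n) =
    Complex.I * (circlePt r (-t) ^ n - if n = 0 then 1 else 0) := by
  rw [csc_Q hr hr1, neg_neg, csc_K_nat hr hr1, circlePt_pow]
  rcases eq_or_ne n 0 with h | h
  · subst h
    have := csc_K_nat hr hr1 t 0
    simp only [Nat.cast_zero, neg_zero] at this ⊢
    rw [this]; simp [csκ, csE_zero]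
  · rw [csc_K_neg hr hr1 _ n h]; simp [csκ, h]; ring

end kern


/-! ### Growth of Hardy space functions -/

section growth
variable {Y : Type*} [NormedAddCommGroup Y] [NormedSpace ℂ Y] [CompleteSpace Y]

theorem circlePt_cont (r : ℝ) : Continuous (circlePt r) := by
  unfold circlePt; fun_prop

theorem circlePt_periodic (r t : ℝ) : circlePt r (t + 1) = circlePt r t := by
  rw [circlePt_eq, circlePt_eq, csE_periodic]

theorem cs_comp_cont {Y : Type*} [NormedAddCommGroup Y] {F : ℂ → Y} (hF : ContinuousOn F (Metric.ball 0 1)) {r : ℝ} (hr : 0 ≤ r)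
    (hr1 : r < 1) : Continuous fun t => F (circlePt r t) := by
  refine hF.comp_continuous (circlePt_cont r) fun t => ?_
  rw [mem_ball_zero_iff, circlePt_norm hr]; exact hr1

theorem cs_cauchy {F : ℂ → Y} (hF : DifferentiableOn ℂ F (Metric.ball 0 1)) {ρ : ℝ}
    (hρ1 : ρ < 1) {w : ℂ} (hw : ‖w‖ < ρ) :
    ‖F w‖ ≤ (1 / (ρ - ‖w‖)) * ∫ t in I₀, ‖F (circlePt ρ t)‖ := by
  have hρ : 0 < ρ := (norm_nonneg w).trans_lt hw
  have hsub : Metric.closedBall (0:ℂ) ρ ⊆ Metric.ball 0 1 := Metric.closedBall_subset_ball hρ1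
  have hc := (hF.diffContOnCl_ball hsub).two_pi_i_inv_smul_circleIntegral_sub_inv_smul
    (w := w) (by simpa using hw)
  have hcm : ∀ t : ℝ, circleMap 0 ρ (2 * Real.pi * t) = circlePt ρ t := fun t => by
    rw [circleMap, circlePt]; push_cast; ring
  have hcont : Continuous fun θ => F (circleMap 0 ρ θ) := by
    refine hF.continuousOn.comp_continuous (continuous_circleMap 0 ρ) fun θ => ?_
    rw [mem_ball_zero_iff, norm_circleMap_zero, abs_of_pos hρ]; exact hρ1
  have hI : ∫ θ in (0:ℝ)..(2 * Real.pi), ‖F (circleMap 0 ρ θ)‖ =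
      (2 * Real.pi) * ∫ t in I₀, ‖F (circlePt ρ t)‖ := by
    have h1 := intervalIntegral.mul_integral_comp_mul_left (a := 0) (b := 1)
      (f := fun θ => ‖F (circleMap 0 ρ θ)‖) (2 * Real.pi)
    simp only [mul_zero, mul_one, hcm] at h1
    rw [← h1, cs_setInt]
    congr 1
    have h2 := Function.Periodic.intervalIntegral_add_eq (f := fun t => ‖F (circlePt ρ t)‖)
      (T := 1) (fun t => by simp only [circlePt_periodic]) 0 (-(1:ℝ)/2)
    rw [zero_add, show -(1:ℝ)/2 + 1 = 1/2 by norm_num] at h2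
    exact h2
  have hpos : 0 < ρ - ‖w‖ := sub_pos.2 hw
  have hb : ‖∮ z in C(0, ρ), (z - w)⁻¹ • F z‖ ≤
      ∫ θ in (0:ℝ)..(2 * Real.pi), (1 / (ρ - ‖w‖)) * ‖F (circleMap 0 ρ θ)‖ := by
    rw [circleIntegral]
    refine intervalIntegral.norm_integral_le_of_norm_le (by positivity) ?_
      ((continuous_const.mul hcont.norm).intervalIntegrable _ _)
    refine Eventually.of_forall fun θ _ => ?_
    rw [norm_smul, norm_smul, deriv_circleMap, norm_mul, Complex.norm_I, norm_circleMap_zero,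
      abs_of_pos hρ, norm_inv, mul_one]
    have h3 : ρ - ‖w‖ ≤ ‖circleMap 0 ρ θ - w‖ := by
      have := norm_sub_norm_le (circleMap 0 ρ θ) w
      rwa [norm_circleMap_zero, abs_of_pos hρ] at this
    rw [one_div]
    have h4 : ‖circleMap 0 ρ θ - w‖⁻¹ ≤ (ρ - ‖w‖)⁻¹ := inv_anti₀ hpos h3
    calc ρ * (‖circleMap 0 ρ θ - w‖⁻¹ * ‖F (circleMap 0 ρ θ)‖)
        ≤ 1 * ((ρ - ‖w‖)⁻¹ * ‖F (circleMap 0 ρ θ)‖) := by gcongr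
      _ = _ := one_mul _
  rw [intervalIntegral.integral_const_mul, hI] at hb
  have hn : ‖(2 * Real.pi * Complex.I : ℂ)⁻¹‖ = (2 * Real.pi)⁻¹ := by simp [Real.pi_pos.le]
  rw [← hc, norm_smul, hn]
  calc (2 * Real.pi)⁻¹ * ‖∮ z in C(0, ρ), (z - w)⁻¹ • F z‖
      ≤ (2 * Real.pi)⁻¹ * (1 / (ρ - ‖w‖) * (2 * Real.pi * ∫ t in I₀, ‖F (circlePt ρ t)‖)) := by
        gcongr
    _ = _ := by field_simp

theorem cs_growth_aux {G : ℂ → Y} (hG : DifferentiableOn ℂ G (Metric.ball 0 1))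
    (hGc : ContinuousOn G (Metric.closedBall 0 1)) {p : ℝ} (hp : 0 < p) (hp1 : p ≤ 1) {B : ℝ}
    (hB : ∀ r, 0 ≤ r → r < 1 → ∫ t in I₀, ‖G (circlePt r t)‖ ^ p ≤ B) {z : ℂ} (hz : ‖z‖ ≤ 1) :
    ‖G z‖ * (1 - ‖z‖) ^ (1/p) ≤ (2 ^ (1/p) * B) ^ (1/p) := by
  have hB0 : 0 ≤ B := le_trans (integral_nonneg fun t => by positivity) (hB 0 le_rfl one_pos)
  have hcont : ContinuousOn (fun z : ℂ => ‖G z‖ * (1 - ‖z‖) ^ (1/p)) (Metric.closedBall 0 1) := by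
    refine hGc.norm.mul (ContinuousOn.rpow_const ?_ fun x _ => Or.inr (by positivity))
    exact (continuous_const.sub continuous_norm).continuousOn
  obtain ⟨z₀, hz₀, hmax⟩ := (isCompact_closedBall (0:ℂ) 1).exists_isMaxOn
    ⟨0, by simp⟩ hcont
  have hmax' : ∀ w : ℂ, ‖w‖ ≤ 1 → ‖G w‖ * (1 - ‖w‖) ^ (1/p) ≤ ‖G z₀‖ * (1 - ‖z₀‖) ^ (1/p) :=
    fun w hw => hmax (by simpa using hw)
  refine (hmax' z hz).trans ?_
  have hz₀' : ‖z₀‖ ≤ 1 := by simpa using hz₀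
  set A := ‖G z₀‖ * (1 - ‖z₀‖) ^ (1/p) with hA
  have hd0 : 0 ≤ 1 - ‖z₀‖ := by linarith
  have hA0 : 0 ≤ A := by positivity
  rcases hA0.eq_or_lt with h | hApos
  · rw [← h]; positivity
  set d := 1 - ‖z₀‖ with hd
  have hdpos : 0 < d := by
    rcases hd0.eq_or_lt with h | h
    · exfalso
      rw [← h, Real.zero_rpow (by positivity), mul_zero] at hA
      linarith
    · exact h
  have hd1 : d ≤ 1 := by have := norm_nonneg z₀; linarith
  have hρ1 : 1 - d/2 < 1 := by linarith
  have hρ0 : 0 ≤ 1 - d/2 := by linarith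
  have h1 := cs_cauchy hG hρ1 (w := z₀) (by linarith)
  have e1 : 1 / (1 - d/2 - ‖z₀‖) = 2/d := by
    rw [show 1 - d/2 - ‖z₀‖ = d/2 by linarith]; field_simp
  rw [e1] at h1
  have hpt : ∀ t, ‖G (circlePt (1 - d/2) t)‖ ≤
      (A * (2/d) ^ (1/p)) ^ (1 - p) * ‖G (circlePt (1 - d/2) t)‖ ^ p := by
    intro t
    have h2 := hmax' (circlePt (1 - d/2) t) (by rw [circlePt_norm hρ0]; linarith)
    rw [circlePt_norm hρ0, show 1 - (1 - d/2) = d/2 by ring] at h2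
    have h3 : ‖G (circlePt (1 - d/2) t)‖ ≤ A * (2/d) ^ (1/p) := by
      have h4 : (d/2) ^ (1/p) * (2/d) ^ (1/p) = 1 := by
        rw [← Real.mul_rpow (by positivity) (by positivity)]
        rw [show d/2 * (2/d) = 1 by field_simp, Real.one_rpow]
      calc ‖G (circlePt (1 - d/2) t)‖
          = ‖G (circlePt (1 - d/2) t)‖ * (d/2) ^ (1/p) * (2/d) ^ (1/p) := by
            rw [mul_assoc, h4, mul_one]
        _ ≤ A * (2/d) ^ (1/p) := by gcongr
    calc ‖G (circlePt (1 - d/2) t)‖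
        = ‖G (circlePt (1 - d/2) t)‖ ^ (1 - p) * ‖G (circlePt (1 - d/2) t)‖ ^ p := by
          rw [← Real.rpow_add_of_nonneg (norm_nonneg _) (by linarith) hp.le]
          simp
      _ ≤ _ := by
          gcongr
  have hGcont : Continuous fun t => G (circlePt (1 - d/2) t) :=
    cs_comp_cont hG.continuousOn hρ0 hρ1
  have hrcont : Continuous fun t => ‖G (circlePt (1 - d/2) t)‖ ^ p :=
    hGcont.norm.rpow_const fun _ => Or.inr hp.le
  have hio : ∀ f : ℝ → ℝ, Continuous f → IntegrableOn f I₀ := fun f hf =>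
    (hf.integrableOn_Icc (a := -(1:ℝ)/2) (b := 1/2)).mono_set Set.Ico_subset_Icc_self
  have h5 : ∫ t in I₀, ‖G (circlePt (1 - d/2) t)‖ ≤ (A * (2/d) ^ (1/p)) ^ (1 - p) * B := by
    calc ∫ t in I₀, ‖G (circlePt (1 - d/2) t)‖
        ≤ ∫ t in I₀, (A * (2/d) ^ (1/p)) ^ (1 - p) * ‖G (circlePt (1 - d/2) t)‖ ^ p :=
          integral_mono (hio _ hGcont.norm) (hio _ (continuous_const.mul hrcont)) hpt
      _ = (A * (2/d) ^ (1/p)) ^ (1 - p) * ∫ t in I₀, ‖G (circlePt (1 - d/2) t)‖ ^ p :=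
          integral_const_mul _ _
      _ ≤ _ := by gcongr; exact hB _ hρ0 hρ1
  have h6 : A ≤ 2 ^ (1/p) * B * A ^ (1 - p) := by
    calc A = ‖G z₀‖ * d ^ (1/p) := hA
      _ ≤ (2/d * ((A * (2/d) ^ (1/p)) ^ (1 - p) * B)) * d ^ (1/p) := by
          gcongr
          exact h1.trans (by gcongr)
      _ = ((2/d) * ((2/d) ^ (1/p)) ^ (1-p)) * d ^ (1/p) * B * A ^ (1-p) := by
          rw [Real.mul_rpow hA0 (by positivity)]; ring
      _ = ((2/d) ^ (1/p) * d ^ (1/p)) * B * A ^ (1-p) := by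
          congr 3
          rw [← Real.rpow_mul (by positivity)]
          nth_rewrite 1 [← Real.rpow_one (2/d)]
          rw [← Real.rpow_add (by positivity)]
          congr 1
          field_simp; ring
      _ = 2 ^ (1/p) * B * A ^ (1-p) := by
          rw [← Real.mul_rpow (by positivity) (by positivity)]
          rw [show 2/d * d = 2 by field_simp]
  have h7 : A ^ p ≤ 2 ^ (1/p) * B := by
    have h8 : A ^ p * A ^ (1-p) ≤ 2 ^ (1/p) * B * A ^ (1-p) := by
      rw [← Real.rpow_add hApos]; simpa using h6
    exact le_of_mul_le_mul_right h8 (by positivity)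
  calc A = (A ^ p) ^ (1/p) := by
        rw [← Real.rpow_mul hA0, mul_one_div_cancel hp.ne', Real.rpow_one]
    _ ≤ _ := by gcongr

theorem cs_growth {F : ℂ → Y} (hF : DifferentiableOn ℂ F (Metric.ball 0 1))
    {p : ℝ} (hp : 0 < p) (hp1 : p ≤ 1) {B : ℝ}
    (hB : ∀ r, 0 ≤ r → r < 1 → ∫ t in I₀, ‖F (circlePt r t)‖ ^ p ≤ B) {z : ℂ} (hz : ‖z‖ < 1) :
    ‖F z‖ * (1 - ‖z‖) ^ (1/p) ≤ (2 ^ (1/p) * B) ^ (1/p) := by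
  have hR : ∀ R : ℝ, 0 < R → R < 1 →
      ‖F (R * z)‖ * (1 - ‖z‖) ^ (1/p) ≤ (2 ^ (1/p) * B) ^ (1/p) := by
    intro R hR0 hR1
    have hmaps : Set.MapsTo (fun w : ℂ => (R:ℂ) * w) (Metric.closedBall 0 1) (Metric.ball 0 1) := by
      intro w hw
      simp only [mem_closedBall_zero_iff, mem_ball_zero_iff, norm_mul, Complex.norm_real,
        Real.norm_of_nonneg hR0.le] at hw ⊢
      nlinarith
    have hGc : ContinuousOn (fun w : ℂ => F (R * w)) (Metric.closedBall 0 1) :=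
      hF.continuousOn.comp (continuous_const.mul continuous_id).continuousOn hmaps
    have hGd : DifferentiableOn ℂ (fun w : ℂ => F (R * w)) (Metric.ball 0 1) :=
      hF.comp ((differentiable_const _).mul differentiable_id).differentiableOn
        (hmaps.mono_left Metric.ball_subset_closedBall)
    refine cs_growth_aux (G := fun w => F (R * w)) hGd hGc hp hp1 ?_ hz.le
    intro r hr hr1
    have : ∀ t, (R:ℂ) * circlePt r t = circlePt (R * r) t := fun t => by
      rw [circlePt, circlePt]; push_cast; ring
    simp only [this]
    exact hB _ (by positivity) (by nlinarith)
  have hlim : Tendsto (fun R : ℝ => ‖F (R * z)‖ * (1 - ‖z‖) ^ (1/p)) (𝓝[<] 1)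
      (𝓝 (‖F z‖ * (1 - ‖z‖) ^ (1/p))) := by
    refine Tendsto.mul_const _ (Tendsto.norm ?_)
    have hc : ContinuousAt F z :=
      hF.continuousOn.continuousAt (Metric.isOpen_ball.mem_nhds (by simpa using hz))
    have h2 : Tendsto (fun R : ℝ => (R : ℂ) * z) (𝓝[<] 1) (𝓝 z) := by
      have h3 : Continuous (fun R : ℝ => (R : ℂ) * z) := by fun_prop
      have h4 := h3.tendsto 1
      simp only [Complex.ofReal_one, one_mul] at h4
      exact h4.mono_left nhdsWithin_le_nhds
    exact hc.tendsto.comp h2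
  refine le_of_tendsto hlim ?_
  filter_upwards [Ioo_mem_nhdsLT (zero_lt_one' ℝ)] with R hR'
  exact hR R hR'.1 hR'.2

/-- Taylor coefficients. -/
def csA (F : ℂ → Y) (n : ℕ) : Y := ((n.factorial : ℂ)⁻¹) • iteratedDeriv n F 0

theorem csA_growth {F : ℂ → Y} (hF : DifferentiableOn ℂ F (Metric.ball 0 1))
    {p : ℝ} (hp : 0 < p) (hp1 : p ≤ 1) {B : ℝ}
    (hB : ∀ r, 0 ≤ r → r < 1 → ∫ t in I₀, ‖F (circlePt r t)‖ ^ p ≤ B) :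
    ∃ (k : ℕ) (C : ℝ), ∀ n : ℕ, ‖csA F n‖ ≤ C * ((n:ℝ) + 1) ^ k := by
  have hB0 : 0 ≤ B := le_trans (integral_nonneg fun t => by positivity) (hB 0 le_rfl one_pos)
  set K := (2 ^ (1/p) * B) ^ (1/p) with hK
  have hK0 : 0 ≤ K := by positivity
  obtain ⟨k, hk⟩ := exists_nat_ge (1/p)
  refine ⟨k, K * 2 ^ k * Real.exp 1, fun n => ?_⟩
  have hn : (0:ℝ) ≤ n := Nat.cast_nonneg n
  set ρ : ℝ := (n+1)/(n+2) with hρ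
  have hρ0 : 0 < ρ := by positivity
  have hρ1 : ρ < 1 := by rw [hρ, div_lt_one (by positivity)]; linarith
  have h1ρ : 1 - ρ = 1/(n+2) := by rw [hρ]; field_simp; ring
  have hC : ∀ z ∈ Metric.sphere (0:ℂ) ρ, ‖F z‖ ≤ K * (n+2)^k := by
    intro z hz
    have hz' : ‖z‖ = ρ := by simpa using hz
    have h1 := cs_growth hF hp hp1 hB (z := z) (by rw [hz']; exact hρ1)
    rw [hz', h1ρ, ← hK, one_div (_ + _), Real.inv_rpow (by positivity), ← div_eq_mul_inv,
      div_le_iff₀ (by positivity)] at h1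
    refine h1.trans ?_
    gcongr
    rw [← Real.rpow_natCast]
    exact Real.rpow_le_rpow_of_exponent_le (by linarith) hk
  have h2 := Complex.norm_iteratedDeriv_le_of_forall_mem_sphere_norm_le n hρ0
    (hF.diffContOnCl_ball (Metric.closedBall_subset_ball hρ1)) hC
  have h3 : (ρ ^ n)⁻¹ ≤ Real.exp 1 := by
    have e : ρ⁻¹ = 1/(n+1) + 1 := by rw [hρ]; field_simp; ring
    rw [← inv_pow, e]
    calc (1/((n:ℝ)+1) + 1)^n ≤ (Real.exp (1/((n:ℝ)+1)))^n := by
          gcongr; exact Real.add_one_le_exp _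
      _ = Real.exp (n * (1/((n:ℝ)+1))) := by rw [Real.exp_nat_mul]
      _ ≤ Real.exp 1 := by
          apply Real.exp_le_exp.2
          rw [mul_one_div, div_le_one (by positivity)]; linarith
  rw [csA, norm_smul, norm_inv, Complex.norm_natCast]
  have hf : (0:ℝ) < n.factorial := by exact_mod_cast n.factorial_pos
  calc (n.factorial : ℝ)⁻¹ * ‖iteratedDeriv n F 0‖
      ≤ (n.factorial : ℝ)⁻¹ * (n.factorial * (K * (n+2)^k) / ρ ^ n) := by gcongr
    _ = K * (n+2)^k * (ρ ^ n)⁻¹ := by field_simp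
    _ ≤ K * (2 * (n+1))^k * Real.exp 1 := by gcongr; linarith
    _ = _ := by rw [mul_pow]; ring

theorem csA_hasSum {F : ℂ → Y} (hF : DifferentiableOn ℂ F (Metric.ball 0 1)) {z : ℂ}
    (hz : ‖z‖ < 1) : HasSum (fun n => z ^ n • csA F n) (F z) := by
  have := Complex.hasSum_taylorSeries_on_ball hF (z := z) (by simpa using hz)
  convert this using 2 with n
  rw [csA, sub_zero, smul_comm]

theorem csA_add {F G : ℂ → Y} (hF : DifferentiableOn ℂ F (Metric.ball 0 1))
    (hG : DifferentiableOn ℂ G (Metric.ball 0 1)) (n : ℕ) :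
    csA (F + G) n = csA F n + csA G n := by
  have h0 : Metric.ball (0:ℂ) 1 ∈ 𝓝 0 := Metric.ball_mem_nhds 0 one_pos
  rw [csA, csA, csA, iteratedDeriv_add (hF.analyticAt h0).contDiffAt (hG.analyticAt h0).contDiffAt,
    smul_add]

theorem csA_smul {F : ℂ → Y} (c : ℂ) (hF : DifferentiableOn ℂ F (Metric.ball 0 1)) (n : ℕ) :
    csA (c • F) n = c • csA F n := by
  have h0 : Metric.ball (0:ℂ) 1 ∈ 𝓝 0 := Metric.ball_mem_nhds 0 one_pos
  rw [csA, csA, iteratedDeriv_const_smul (hF.analyticAt h0).contDiffAt c, smul_comm]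

theorem cs_summable_pow {r : ℝ} (hr : 0 ≤ r) (hr1 : r < 1) (C : ℝ) (k : ℕ) :
    Summable fun n : ℕ => C * ((n:ℝ) + 1) ^ k * r ^ n := by
  have h := (summable_pow_mul_geometric_of_norm_lt_one (R := ℝ) k
    (r := r) (by rwa [Real.norm_of_nonneg hr])).mul_left (|C| * 2 ^ k)
  refine Summable.of_norm_bounded_eventually_nat h ?_
  filter_upwards [eventually_ge_atTop 1] with n hn
  have hn' : (1:ℝ) ≤ n := by exact_mod_cast hn
  rw [norm_mul, norm_mul, norm_pow, norm_pow, Real.norm_of_nonneg hr, Real.norm_eq_abs,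
    Real.norm_of_nonneg (by positivity : (0:ℝ) ≤ n + 1)]
  calc |C| * ((n:ℝ)+1)^k * r^n ≤ |C| * (2 * n)^k * r^n := by gcongr; linarith
    _ = _ := by rw [mul_pow]; ring

theorem cs_powerSeries {a : ℕ → Y} {k : ℕ} {C : ℝ} (ha : ∀ n, ‖a n‖ ≤ C * ((n:ℝ) + 1) ^ k)
    {F : ℂ → Y} (hF : ∀ z, ‖z‖ < 1 → HasSum (fun n => z ^ n • a n) (F z)) :
    DifferentiableOn ℂ F (Metric.ball 0 1) ∧ ∀ n, csA F n = a n := by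
  let P : FormalMultilinearSeries ℂ ℂ Y := fun n => ContinuousMultilinearMap.mkPiRing ℂ (Fin n) (a n)
  have hP : HasFPowerSeriesOnBall F P 0 1 := by
    refine ⟨?_, one_pos, ?_⟩
    · refine ENNReal.le_of_forall_nnreal_lt fun r hr => ?_
      have hr1 : (r:ℝ) < 1 := by exact_mod_cast hr
      refine P.le_radius_of_summable_norm ?_
      refine Summable.of_nonneg_of_le (fun n => by positivity) (fun n => ?_)
        (cs_summable_pow r.2 hr1 C k)
      simp only [P, ContinuousMultilinearMap.norm_mkPiRing]
      exact mul_le_mul_of_nonneg_right (ha n) (by positivity)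
    · intro y hy
      have hy' : ‖y‖ < 1 := by
        rw [mem_eball_zero_iff] at hy
        rw [← ofReal_norm, ENNReal.ofReal_lt_one] at hy
        exact hy
      rw [zero_add]
      convert hF y hy' using 2 with n
      simp [P]
  constructor
  · have := hP.differentiableOn
    rwa [← Metric.eball_ofReal, ENNReal.ofReal_one]
  · intro n
    have := hP.factorial_smul 1 n
    rw [csA, iteratedDeriv, ← this, ← Nat.cast_smul_eq_nsmul ℂ, smul_smul,
      inv_mul_cancel₀ (by exact_mod_cast n.factorial_ne_zero), one_smul]
    simp [P]

end growth


/-! ### The transforms -/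

section transf
variable {Y : Type*} [NormedAddCommGroup Y] [NormedSpace ℂ Y]

/-- Polynomially bounded sequences. -/
def csPB (a : ℕ → Y) : Prop := ∃ (k : ℕ) (C : ℝ), ∀ n : ℕ, ‖a n‖ ≤ C * ((n:ℝ) + 1) ^ k

/-- The summands of the transform. -/
def csv (α β : ℂ) (a : ℕ → Y) (g : ℝ → ℂ) (n : ℕ) : Y := (α * csc g n + β * csc g (-n)) • a n

theorem cs_sum_sq : Summable (fun n : ℕ => 1 / ((n:ℝ) + 1) ^ 2) := by
  have := (summable_nat_add_iff (f := fun n : ℕ => 1 / (n:ℝ) ^ 2) 1).2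
    (Real.summable_one_div_nat_pow.2 (by norm_num))
  simpa using this

theorem csv_bound (α β : ℂ) {a : ℕ → Y} {k : ℕ} {C : ℝ}
    (ha : ∀ n : ℕ, ‖a n‖ ≤ C * ((n:ℝ) + 1) ^ k) {g : ℝ → ℂ} (hg : Smooth1PeriodicC g) (n : ℕ) :
    ‖csv α β a g n‖ ≤ ((‖α‖ + ‖β‖) * (2 ^ (k+2) * C) *
      ∑ i ∈ Finset.range (k + 2 + 1), testSeminormC i g) * (1 / ((n:ℝ) + 1) ^ 2) := by
  set S := ∑ i ∈ Finset.range (k + 2 + 1), testSeminormC i g with hS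
  have hS0 : 0 ≤ S := Finset.sum_nonneg fun i _ => cs_seminorm_nonneg i _
  have hC : 0 ≤ C := by
    have := (norm_nonneg _).trans (ha 0)
    simpa using this
  have hn : (0:ℝ) ≤ n := Nat.cast_nonneg n
  have h1 : ((n:ℝ) + 1) ^ (k+2) * ‖csc g n‖ ≤ 2 ^ (k+2) * S := by
    have := csc_decay hg n (k+2)
    rwa [Int.cast_natCast, abs_of_nonneg hn] at this
  have h2 : ((n:ℝ) + 1) ^ (k+2) * ‖csc g (-n)‖ ≤ 2 ^ (k+2) * S := by
    have := csc_decay hg (-n) (k+2)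
    rwa [Int.cast_neg, abs_neg, Int.cast_natCast, abs_of_nonneg hn] at this
  rw [mul_one_div, le_div_iff₀ (by positivity), csv, norm_smul]
  calc ‖α * csc g n + β * csc g (-n)‖ * ‖a n‖ * ((n:ℝ)+1)^2
      ≤ (‖α‖ * ‖csc g n‖ + ‖β‖ * ‖csc g (-n)‖) * (C * ((n:ℝ)+1)^k) * ((n:ℝ)+1)^2 := by
        gcongr
        · refine (norm_add_le _ _).trans ?_
          rw [norm_mul, norm_mul]
        · exact ha n
    _ = C * (‖α‖ * (((n:ℝ)+1)^(k+2) * ‖csc g n‖) + ‖β‖ * (((n:ℝ)+1)^(k+2) * ‖csc g (-n)‖)) := by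
        ring
    _ ≤ C * (‖α‖ * (2 ^ (k+2) * S) + ‖β‖ * (2 ^ (k+2) * S)) := by gcongr
    _ = _ := by ring

variable [CompleteSpace Y]

theorem csv_summable (α β : ℂ) {a : ℕ → Y} (ha : csPB a) {g : ℝ → ℂ} (hg : Smooth1PeriodicC g) :
    Summable (csv α β a g) := by
  obtain ⟨k, C, ha⟩ := ha
  exact Summable.of_norm_bounded (cs_sum_sq.mul_left _) (csv_bound α β ha hg)

open Classical in
/-- The transform on coefficient sequences. -/
def csT (α β : ℂ) (a : ℕ → Y) (g : ℝ → ℂ) : Y :=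
  if Smooth1PeriodicC g then ∑' n, csv α β a g n else 0

theorem csT_eq (α β : ℂ) (a : ℕ → Y) {g : ℝ → ℂ} (hg : Smooth1PeriodicC g) :
    csT α β a g = ∑' n, csv α β a g n := if_pos hg

theorem csT_hasSum (α β : ℂ) {a : ℕ → Y} (ha : csPB a) {g : ℝ → ℂ} (hg : Smooth1PeriodicC g) :
    HasSum (csv α β a g) (csT α β a g) := by
  rw [csT_eq α β a hg]
  exact (csv_summable α β ha hg).hasSum

theorem csT_distr (α β : ℂ) {a : ℕ → Y} (ha : csPB a) :
    IsPeriodicDistributionC (csT α β a) := by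
  refine ⟨fun g h hg hh => ?_, fun c g hg => ?_, ?_⟩
  · refine (csT_hasSum α β ha (cs_smooth_add hg hh)).unique ?_
    convert (csT_hasSum α β ha hg).add (csT_hasSum α β ha hh) using 1
    funext n
    simp only [csv, csc_add hg.1.continuous hh.1.continuous]
    rw [← add_smul]; congr 1; ring
  · refine (csT_hasSum α β ha (cs_smooth_smul c hg)).unique ?_
    convert (csT_hasSum α β ha hg).const_smul c using 1
    funext n
    simp only [csv, csc_smul, smul_smul]
    congr 1; ring
  · obtain ⟨k, C, hC⟩ := id ha
    refine ⟨k + 2, (‖α‖ + ‖β‖) * (2 ^ (k+2) * C) * ∑' n : ℕ, 1 / ((n:ℝ) + 1) ^ 2, fun g hg => ?_⟩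
    rw [csT_eq α β a hg]
    refine (tsum_of_norm_bounded ((cs_sum_sq.mul_left _).hasSum) (csv_bound α β hC hg)).trans ?_
    rw [tsum_mul_left]
    exact le_of_eq (by ring)

theorem csT_flip (α β : ℂ) {a : ℕ → Y} {g : ℝ → ℂ} (hg : Smooth1PeriodicC g) :
    csT α β a (fun t => g (-t)) = csT β α a g := by
  rw [csT_eq α β a (cs_smooth_neg hg), csT_eq β α a hg]
  congr 1
  funext n
  simp only [csv, csc_neg, neg_neg]
  rw [add_comm]

/-- The domain of the transform. -/
def csW (Y : Type*) [NormedAddCommGroup Y] [NormedSpace ℂ Y] [CompleteSpace Y] :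
    Submodule ℂ (ℂ → Y) where
  carrier := {F | DifferentiableOn ℂ F (Metric.ball 0 1) ∧ csPB (csA F)}
  zero_mem' := by
    have h0 : DifferentiableOn ℂ (0 : ℂ → Y) (Metric.ball 0 1) := differentiableOn_const 0
    refine ⟨h0, 0, 0, fun n => ?_⟩
    have := csA_smul (0:ℂ) h0 n
    rw [zero_smul, zero_smul] at this
    rw [this]; simp
  add_mem' := by
    rintro F G ⟨hF, k, C, hk⟩ ⟨hG, l, D, hl⟩
    refine ⟨hF.add hG, k + l, |C| + |D|, fun n => ?_⟩
    rw [csA_add hF hG]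
    have h1 : (1:ℝ) ≤ n + 1 := by have : (0:ℝ) ≤ n := Nat.cast_nonneg n; linarith
    calc ‖csA F n + csA G n‖ ≤ C * ((n:ℝ)+1)^k + D * ((n:ℝ)+1)^l :=
          (norm_add_le _ _).trans (add_le_add (hk n) (hl n))
      _ ≤ |C| * ((n:ℝ)+1)^(k+l) + |D| * ((n:ℝ)+1)^(k+l) := by
          gcongr
          · exact le_abs_self C
          · omega
          · exact le_abs_self D
          · omega
      _ = _ := by ring
  smul_mem' := by
    rintro c F ⟨hF, k, C, hk⟩
    refine ⟨hF.const_smul c, k, ‖c‖ * C, fun n => ?_⟩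
    rw [csA_smul c hF, norm_smul, mul_assoc]
    gcongr
    exact hk n

theorem csS_exists (α β : ℂ) : ∃ S : (ℂ → Y) →ₗ[ℂ] ((ℝ → ℂ) → Y),
    ∀ F ∈ csW Y, S F = csT α β (csA F) := by
  let S₀ : csW Y →ₗ[ℂ] ((ℝ → ℂ) → Y) :=
    { toFun := fun F => csT α β (csA F.1)
      map_add' := by
        rintro ⟨F, hF⟩ ⟨G, hG⟩
        funext g
        by_cases hg : Smooth1PeriodicC g
        · have hFG := (csW Y).add_mem hF hG
          refine (csT_hasSum α β hFG.2 hg).unique ?_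
          convert (csT_hasSum α β hF.2 hg).add (csT_hasSum α β hG.2 hg) using 1
          · funext n
            simp only [csv]
            rw [csA_add hF.1 hG.1, smul_add]
          · rfl
        · simp [csT, hg]
      map_smul' := by
        rintro c ⟨F, hF⟩
        funext g
        by_cases hg : Smooth1PeriodicC g
        · have hcF := (csW Y).smul_mem c hF
          refine (csT_hasSum α β hcF.2 hg).unique ?_
          convert (csT_hasSum α β hF.2 hg).const_smul c using 1
          · funext n
            simp only [csv]
            rw [csA_smul c hF.1, smul_comm]
          · rfl
        · simp [csT, hg] }
  obtain ⟨S, hS⟩ := LinearMap.exists_extend S₀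
  refine ⟨S, fun F hF => ?_⟩
  have := LinearMap.congr_fun hS ⟨F, hF⟩
  exact this

theorem csW_of_series {a : ℕ → Y} (ha : csPB a) {F : ℂ → Y}
    (hF : ∀ z, ‖z‖ < 1 → HasSum (fun n => z ^ n • a n) (F z)) : F ∈ csW Y ∧ csA F = a := by
  obtain ⟨k, C, hC⟩ := id ha
  obtain ⟨h1, h2⟩ := cs_powerSeries hC hF
  have h3 : csA F = a := funext h2
  exact ⟨⟨h1, by rw [h3]; exact ha⟩, h3⟩

theorem cs_monomial (n : ℕ) (x : Y) :
    (fun z : ℂ => z ^ n • x) ∈ csW Y ∧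
      csA (fun z : ℂ => z ^ n • x) = fun m => if m = n then x else 0 := by
  refine csW_of_series ⟨0, ‖x‖, fun m => ?_⟩ fun z _ => ?_
  · split_ifs <;> simp
  · convert hasSum_ite_eq n (z ^ n • x) using 2 with m
    split_ifs with h
    · rw [h]
    · simp

theorem csT_monomial (α β : ℂ) (n : ℕ) (x : Y) {g : ℝ → ℂ} (hg : Smooth1PeriodicC g) :
    csT α β (fun m => if m = n then x else 0) g = (α * csc g n + β * csc g (-n)) • x := by
  rw [csT_eq α β _ hg, tsum_eq_single n]
  · simp [csv]
  · intro m hm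
    simp [csv, hm]

theorem csA_zero (F : ℂ → Y) : csA F 0 = F 0 := by simp [csA]

theorem csT_p (α β : ℂ) {F : ℂ → Y} (hF : F ∈ csW Y) {r : ℝ} (hr : 0 ≤ r) (hr1 : r < 1) (t : ℝ) :
    pConvC (csT α β (csA F)) r t = α • F (circlePt r t) + β • F (circlePt r (-t)) := by
  refine (csT_hasSum α β hF.2 (csP_smooth hr hr1 t)).unique ?_
  have h1 := (csA_hasSum hF.1 (z := circlePt r t) (by rwa [circlePt_norm hr])).const_smul α
  have h2 := (csA_hasSum hF.1 (z := circlePt r (-t)) (by rwa [circlePt_norm hr])).const_smul β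
  convert h1.add h2 using 1
  funext n
  rw [csv, csc_P_nat hr hr1, csc_P_neg hr hr1, add_smul, mul_smul, mul_smul]

theorem csT_q (α β : ℂ) {F : ℂ → Y} (hF : F ∈ csW Y) {r : ℝ} (hr : 0 ≤ r) (hr1 : r < 1) (t : ℝ) :
    qConvC (csT α β (csA F)) r t = (-Complex.I * α) • (F (circlePt r t) - F 0) +
      (Complex.I * β) • (F (circlePt r (-t)) - F 0) := by
  refine (csT_hasSum α β hF.2 (csQ_smooth hr hr1 t)).unique ?_
  have h0 : HasSum (fun n : ℕ => if n = 0 then F 0 else 0) (F 0) := hasSum_ite_eq 0 (F 0)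
  have h1 := ((csA_hasSum hF.1 (z := circlePt r t)
    (by rwa [circlePt_norm hr])).sub h0).const_smul (-Complex.I * α)
  have h2 := ((csA_hasSum hF.1 (z := circlePt r (-t))
    (by rwa [circlePt_norm hr])).sub h0).const_smul (Complex.I * β)
  convert h1.add h2 using 1
  funext n
  rw [csv, csc_Q_nat hr hr1, csc_Q_neg hr hr1]
  by_cases hn : n = 0
  · subst hn; simp [csA_zero]
  · simp only [hn, if_false, sub_zero, smul_smul, ← add_smul]
    congr 1; ring

/-! ### Norm inequalities -/

theorem cs_lint_neg (φ : ℝ → ℝ≥0∞) : ∫⁻ t in I₀, φ (-t) = ∫⁻ t in I₀, φ t := by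
  have h1 : ∫⁻ t in I₀, φ t = ∫⁻ t in Set.Ioc (-(1:ℝ)/2) (1/2), φ t :=
    setLIntegral_congr Ico_ae_eq_Ioc
  rw [h1, I₀, ← lintegral_indicator measurableSet_Ico, ← lintegral_indicator measurableSet_Ioc,
    ← lintegral_neg_eq_self (fun t => Set.indicator (Set.Ioc (-(1:ℝ)/2) (1/2)) φ t)]
  congr 1
  funext t
  simp only [Set.indicator, Set.mem_Ico, Set.mem_Ioc]
  have : (-(1:ℝ)/2 ≤ t ∧ t < 1/2) ↔ (-(1:ℝ)/2 < -t ∧ -t ≤ 1/2) := by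
    constructor <;> rintro ⟨h1, h2⟩ <;> constructor <;> linarith
  simp only [this]

theorem cs_rpow_le {p : ℝ} (hp : 0 < p) (hp1 : p ≤ 1) {Z : Type*} [NormedAddCommGroup Z] {x y z : Z}
    (h : ‖x‖ ≤ ‖y‖ + ‖z‖) :
    (‖x‖₊ : ℝ≥0∞) ^ p ≤ (‖y‖₊ : ℝ≥0∞) ^ p + (‖z‖₊ : ℝ≥0∞) ^ p := by
  have h1 : (‖x‖₊ : ℝ≥0∞) ≤ ‖y‖₊ + ‖z‖₊ := by
    rw [← ENNReal.coe_add, ENNReal.coe_le_coe]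
    exact_mod_cast h
  exact (ENNReal.rpow_le_rpow h1 hp.le).trans (ENNReal.rpow_add_le_add_rpow _ _ hp.le hp1)

section ineq
variable {Z : Type*} [NormedAddCommGroup Z] {p : ℝ}
  {F : ℂ → Z} {u : (ℝ → ℂ) → Z}

theorem cs_lower_aux (hp : 0 < p) (hp1 : p ≤ 1) (h : ∀ r t, 0 ≤ r → r < 1 →
      ‖F (circlePt r t)‖ ≤ ‖pConvC u r t‖ + ‖qConvC u r t‖) {r : ℝ} (hr : 0 ≤ r) (hr1 : r < 1) :
    hpIntegral p F r ≤
      ∫⁻ t in I₀, ((‖pConvC u r t‖₊ : ℝ≥0∞) ^ p + (‖qConvC u r t‖₊ : ℝ≥0∞) ^ p) :=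
  lintegral_mono fun t => cs_rpow_le hp hp1 (h r t hr hr1)

theorem cs_lower (hp : 0 < p) (hp1 : p ≤ 1) (h : ∀ r t, 0 ≤ r → r < 1 →
      ‖F (circlePt r t)‖ ≤ ‖pConvC u r t‖ + ‖qConvC u r t‖) :
    qHpD p F ≤ qHpT p u :=
  iSup_mono fun r => ENNReal.rpow_le_rpow (cs_lower_aux hp hp1 h r.2.1 r.2.2) (by positivity)

theorem cs_lower_mem (hp : 0 < p) (hp1 : p ≤ 1) (h : ∀ r t, 0 ≤ r → r < 1 →
      ‖F (circlePt r t)‖ ≤ ‖pConvC u r t‖ + ‖qConvC u r t‖) {r : ℝ} (hr : 0 ≤ r) (hr1 : r < 1) :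
    hpIntegral p F r ≤ (qHpT p u) ^ p := by
  refine (cs_lower_aux hp hp1 h hr hr1).trans ?_
  rw [← ENNReal.rpow_inv_le_iff hp, ← one_div]
  exact le_iSup (fun r : Set.Ico (0 : ℝ) 1 => (∫⁻ t in I₀, ((‖pConvC u r.1 t‖₊ : ℝ≥0∞) ^ p +
    (‖qConvC u r.1 t‖₊ : ℝ≥0∞) ^ p)) ^ (1/p)) ⟨r, hr, hr1⟩

theorem cs_upper (hp : 0 < p) (hp1 : p ≤ 1) (hF : ContinuousOn F (Metric.ball 0 1))
    (hP : ∀ r t, 0 ≤ r → r < 1 →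
      ‖pConvC u r t‖ ≤ ‖F (circlePt r t)‖ + ‖F (circlePt r (-t))‖)
    (hQ : ∀ r t, 0 ≤ r → r < 1 →
      ‖qConvC u r t‖ ≤ ‖F (circlePt r t)‖ + ‖F (circlePt r (-t))‖) :
    qHpT p u ≤ 4 ^ (1/p) * qHpD p F := by
  refine iSup_le fun r => ?_
  have hc := cs_comp_cont hF r.2.1 r.2.2
  have hm : Measurable fun t => (‖F (circlePt r.1 t)‖₊ : ℝ≥0∞) ^ p :=
    ((ENNReal.continuous_rpow_const).comp
      (ENNReal.continuous_coe.comp hc.nnnorm)).measurable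
  have h1 : ∫⁻ t in I₀, ((‖pConvC u r.1 t‖₊ : ℝ≥0∞) ^ p + (‖qConvC u r.1 t‖₊ : ℝ≥0∞) ^ p) ≤
      4 * hpIntegral p F r.1 := by
    calc _ ≤ ∫⁻ t in I₀, (2 * (‖F (circlePt r.1 t)‖₊ : ℝ≥0∞) ^ p +
            2 * (‖F (circlePt r.1 (-t))‖₊ : ℝ≥0∞) ^ p) := by
          refine lintegral_mono fun t => ?_
          refine (add_le_add (cs_rpow_le hp hp1 (hP r.1 t r.2.1 r.2.2))
            (cs_rpow_le hp hp1 (hQ r.1 t r.2.1 r.2.2))).trans (le_of_eq ?_)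
          ring
      _ = 2 * hpIntegral p F r.1 + 2 * hpIntegral p F r.1 := by
          rw [lintegral_add_left (hm.const_mul 2), lintegral_const_mul 2 hm,
            lintegral_const_mul 2 (f := fun t => (‖F (circlePt r.1 (-t))‖₊ : ℝ≥0∞) ^ p)
              (hm.comp measurable_neg),
            cs_lint_neg (fun t => (‖F (circlePt r.1 t)‖₊ : ℝ≥0∞) ^ p)]
          rfl
      _ = 4 * hpIntegral p F r.1 := by ring
  calc _ ≤ (4 * hpIntegral p F r.1) ^ (1/p) := ENNReal.rpow_le_rpow h1 (by positivity)
    _ = 4 ^ (1/p) * (hpIntegral p F r.1) ^ (1/p) := ENNReal.mul_rpow_of_nonneg _ _ (by positivity)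
    _ ≤ _ := by
        gcongr
        exact le_iSup (fun r : Set.Ico (0 : ℝ) 1 => (hpIntegral p F r.1) ^ (1/p)) r

end ineq

theorem cs_qHpD_lt {p : ℝ} (hp : 0 < p) {F : ℂ → Y} (hF : memHpD p F) : qHpD p F < ⊤ := by
  obtain ⟨B, hB, h⟩ := hF.2
  refine lt_of_le_of_lt (iSup_le fun r => ENNReal.rpow_le_rpow (h r.1 r.2.1 r.2.2) ?_)
    (ENNReal.rpow_lt_top_of_nonneg (y := 1/p) (by positivity) hB.ne)
  positivity

theorem cs_mem_W {p : ℝ} (hp : 0 < p) (hp1 : p ≤ 1) {F : ℂ → Y} (hF : memHpD p F) :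
    F ∈ csW Y := by
  obtain ⟨hd, B, hB, h⟩ := hF
  refine ⟨hd, ?_⟩
  refine csA_growth hd hp hp1 (B := B.toReal) fun r hr hr1 => ?_
  have hc := cs_comp_cont hd.continuousOn hr hr1
  rw [integral_eq_lintegral_of_nonneg_ae (Eventually.of_forall fun t => by positivity)
    (hc.norm.rpow_const fun _ => Or.inr hp.le).aestronglyMeasurable]
  refine ENNReal.toReal_mono hB.ne (le_trans (le_of_eq ?_) (h r hr hr1))
  unfold hpIntegral
  congr 1
  funext t
  rw [← ENNReal.ofReal_rpow_of_nonneg (norm_nonneg _) hp.le, ofReal_norm]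
  rfl

theorem cs_cos (g : ℝ → ℂ) (hg : Smooth1PeriodicC g) (n : ℕ) :
    ∫ t in I₀, g t * (Real.cos (2 * Real.pi * n * t) : ℂ) =
      (1/2) * csc g n + (1/2) * csc g (-n) := by
  rw [csc, csc, ← integral_const_mul, ← integral_const_mul, ← integral_add]
  · congr 1
    funext t
    rw [Complex.ofReal_cos, Complex.cos, csE, csE]
    push_cast
    rw [show (-(2 * Real.pi * n * t) * Complex.I : ℂ) = 2 * Real.pi * -n * t * Complex.I by ring]
    ring
  · exact cs_intble (continuous_const.mul (hg.1.continuous.mul (csE_cont _)))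
  · exact cs_intble (continuous_const.mul (hg.1.continuous.mul (csE_cont _)))

theorem cs_sin (g : ℝ → ℂ) (hg : Smooth1PeriodicC g) (n : ℕ) :
    ∫ t in I₀, g t * (Real.sin (2 * Real.pi * n * t) : ℂ) =
      (-Complex.I/2) * csc g n + (Complex.I/2) * csc g (-n) := by
  rw [csc, csc, ← integral_const_mul, ← integral_const_mul, ← integral_add]
  · congr 1
    funext t
    rw [Complex.ofReal_sin, Complex.sin, csE, csE]
    push_cast
    rw [show (-(2 * Real.pi * n * t) * Complex.I : ℂ) = 2 * Real.pi * -n * t * Complex.I by ring]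
    ring
  · exact cs_intble (continuous_const.mul (hg.1.continuous.mul (csE_cont _)))
  · exact cs_intble (continuous_const.mul (hg.1.continuous.mul (csE_cont _)))

/-- Inverting the transform from a distribution with given coefficient relation. -/
theorem cs_series_exists {a : ℕ → Y} (ha : csPB a) :
    ∃ F : ℂ → Y, F ∈ csW Y ∧ csA F = a := by
  refine ⟨fun z => ∑' n, z ^ n • a n, csW_of_series ha fun z hz => ?_⟩
  obtain ⟨k, C, hC⟩ := ha
  refine Summable.hasSum ?_
  refine Summable.of_norm_bounded (cs_summable_pow (norm_nonneg z) hz C k) fun n => ?_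
  rw [norm_smul, norm_pow, mul_comm]
  exact mul_le_mul_of_nonneg_right (hC n) (by positivity)

end transf


/-! ### The two isomorphisms -/

section final
variable {Y : Type*} [NormedAddCommGroup Y] [NormedSpace ℂ Y] [CompleteSpace Y]

theorem cs_norm_lin {c d : ℂ} (hc : ‖c‖ ≤ 1) (hd : ‖d‖ ≤ 1) (x y : Y) :
    ‖c • x + d • y‖ ≤ ‖x‖ + ‖y‖ := by
  refine (norm_add_le _ _).trans ?_
  rw [norm_smul, norm_smul]
  exact add_le_add (mul_le_of_le_one_left (norm_nonneg _) hc)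
    (mul_le_of_le_one_left (norm_nonneg _) hd)

theorem csE_flip (n : ℤ) : (fun t => csE n (-t)) = csE (-n) := funext fun t => csE_neg n t

theorem cs_pq_congr {u v : (ℝ → ℂ) → Y} (h : ∀ g, Smooth1PeriodicC g → v g = u g) {r : ℝ}
    (hr : 0 ≤ r) (hr1 : r < 1) (t : ℝ) : pConvC v r t = pConvC u r t ∧ qConvC v r t = qConvC u r t :=
  ⟨h _ (csP_smooth hr hr1 t), h _ (csQ_smooth hr hr1 t)⟩

theorem cs_mem_of_T {p : ℝ} (hp : 0 < p) (hp1 : p ≤ 1) {F : ℂ → Y} (hF : F ∈ csW Y)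
    {u v : (ℝ → ℂ) → Y} (hu : memHpT p u) (hv : ∀ g, Smooth1PeriodicC g → v g = u g)
    (h : ∀ r t, 0 ≤ r → r < 1 → ‖F (circlePt r t)‖ ≤ ‖pConvC v r t‖ + ‖qConvC v r t‖) :
    memHpD p F := by
  refine ⟨hF.1, (qHpT p u) ^ p, ENNReal.rpow_lt_top_of_nonneg hp.le hu.2.ne, fun r hr hr1 => ?_⟩
  refine cs_lower_mem hp hp1 (fun r t hr hr1 => ?_) hr hr1
  have h1 := cs_pq_congr hv hr hr1 t
  rw [← h1.1, ← h1.2]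
  exact h r t hr hr1

theorem cs_half_le : ‖(1/2 : ℂ)‖ ≤ 1 := by norm_num
theorem cs_I_half_le : ‖(Complex.I/2 : ℂ)‖ ≤ 1 := by
  rw [norm_div, Complex.norm_I]; norm_num
theorem cs_nI_half_le : ‖(-Complex.I/2 : ℂ)‖ ≤ 1 := by
  rw [norm_div, norm_neg, Complex.norm_I]; norm_num

theorem cs_even_q {F : ℂ → Y} (hF : F ∈ csW Y) {r : ℝ} (hr : 0 ≤ r) (hr1 : r < 1) (t : ℝ) :
    qConvC (csT (1/2) (1/2) (csA F)) r t =
      (-Complex.I/2) • F (circlePt r t) + (Complex.I/2) • F (circlePt r (-t)) := by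
  rw [csT_q _ _ hF hr hr1]
  module

theorem cs_even_low {F : ℂ → Y} (hF : F ∈ csW Y) (r t : ℝ) (hr : 0 ≤ r) (hr1 : r < 1) :
    ‖F (circlePt r t)‖ ≤ ‖pConvC (csT (1/2) (1/2) (csA F)) r t‖ +
      ‖qConvC (csT (1/2) (1/2) (csA F)) r t‖ := by
  have h : F (circlePt r t) = (1:ℂ) • pConvC (csT (1/2) (1/2) (csA F)) r t +
      Complex.I • qConvC (csT (1/2) (1/2) (csA F)) r t := by
    rw [cs_even_q hF hr hr1, csT_p _ _ hF hr hr1]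
    simp only [smul_add, smul_smul]
    rw [show Complex.I * (-Complex.I/2) = 1/2 by linear_combination (-1/2) * Complex.I_mul_I,
      show Complex.I * (Complex.I/2) = -1/2 by linear_combination (1/2) * Complex.I_mul_I]
    module
  rw [h]
  exact cs_norm_lin (by simp) (by simp) _ _

theorem cs_odd_p {F : ℂ → Y} (hF : F ∈ csW Y) {r : ℝ} (hr : 0 ≤ r) (hr1 : r < 1) (t : ℝ) :
    pConvC (csT (-Complex.I/2) (Complex.I/2) (csA F)) r t =
      (-Complex.I/2) • F (circlePt r t) + (Complex.I/2) • F (circlePt r (-t)) :=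
  csT_p _ _ hF hr hr1 t

theorem cs_odd_q {F : ℂ → Y} (hF : F ∈ csW Y) (h0 : F 0 = 0)
    {r : ℝ} (hr : 0 ≤ r) (hr1 : r < 1) (t : ℝ) :
    qConvC (csT (-Complex.I/2) (Complex.I/2) (csA F)) r t =
      (-(1/2) : ℂ) • F (circlePt r t) + (-(1/2) : ℂ) • F (circlePt r (-t)) := by
  rw [csT_q _ _ hF hr hr1, h0, sub_zero, sub_zero,
    show -Complex.I * (-Complex.I/2) = -(1/2) by linear_combination (1/2) * Complex.I_mul_I,
    show Complex.I * (Complex.I/2) = -(1/2) by linear_combination (1/2) * Complex.I_mul_I]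

theorem cs_odd_low {F : ℂ → Y} (hF : F ∈ csW Y) (h0 : F 0 = 0)
    (r t : ℝ) (hr : 0 ≤ r) (hr1 : r < 1) :
    ‖F (circlePt r t)‖ ≤ ‖pConvC (csT (-Complex.I/2) (Complex.I/2) (csA F)) r t‖ +
      ‖qConvC (csT (-Complex.I/2) (Complex.I/2) (csA F)) r t‖ := by
  have h : F (circlePt r t) = Complex.I • pConvC (csT (-Complex.I/2) (Complex.I/2) (csA F)) r t +
      (-1:ℂ) • qConvC (csT (-Complex.I/2) (Complex.I/2) (csA F)) r t := by
    rw [cs_odd_q hF h0 hr hr1, cs_odd_p hF hr hr1]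
    simp only [smul_add, smul_smul]
    rw [show Complex.I * (-Complex.I/2) = 1/2 by linear_combination (-1/2) * Complex.I_mul_I,
      show Complex.I * (Complex.I/2) = -1/2 by linear_combination (1/2) * Complex.I_mul_I]
    module
  rw [h]
  exact cs_norm_lin (by simp) (by simp) _ _

/-- Coefficients of the preimage. -/
theorem cs_surj {u : (ℝ → ℂ) → Y} (hu : IsPeriodicDistributionC u) (α β : ℂ) (a : ℕ → Y)
    (ha : csPB a)
    (h : ∀ n : ℕ, n ≠ 0 → α • a n = u (csE (-n)) ∧ β • a n = u (csE n))
    (h0 : (α + β) • a 0 = u (csE 0)) :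
    ∃ F ∈ csW Y, F 0 = a 0 ∧ ∀ g, Smooth1PeriodicC g → csT α β (csA F) g = u g := by
  obtain ⟨F, hF, hA⟩ := cs_series_exists ha
  refine ⟨F, hF, by rw [← hA, csA_zero], fun g hg => ?_⟩
  rw [hA]
  refine (csT_hasSum α β ha hg).unique ?_
  have h1 := (cs_distr_hasSum hu hg).nat_add_neg.sub
    (hasSum_ite_eq 0 (csc g (-0) • u (csE 0)))
  rw [add_sub_cancel_right] at h1
  convert h1 using 1
  funext n
  by_cases hn : n = 0
  · subst hn
    simp only [csv, Nat.cast_zero, neg_zero, if_true, ← h0]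
    module
  · simp only [csv, hn, if_false, sub_zero, neg_neg, ← (h n hn).1, ← (h n hn).2]
    module

theorem cs_four {p : ℝ} (hp : 0 < p) : (4 : ℝ≥0∞) ^ (1/p) < ⊤ :=
  ENNReal.rpow_lt_top_of_nonneg (by positivity) (by norm_num)

theorem cs_main_even (p : ℝ) (hp : 0 < p) (hp1 : p ≤ 1) :
    ∃ Se : (ℂ → Y) →ₗ[ℂ] ((ℝ → ℂ) → Y),
      (∀ (n : ℕ) (x : Y) (g : ℝ → ℂ), Smooth1PeriodicC g →
        Se (fun z => z ^ n • x) g =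
          (∫ t in I₀, g t * (Real.cos (2 * Real.pi * n * t) : ℂ)) • x) ∧
      ∃ c C : ℝ≥0∞, 0 < c ∧ C < ⊤ ∧
        (∀ F, memHpD p F → memHpT p (Se F) ∧ IsEvenDistr (Se F) ∧
          c * qHpD p F ≤ qHpT p (Se F) ∧ qHpT p (Se F) ≤ C * qHpD p F) ∧
        (∀ u, memHpT p u → IsEvenDistr u →
          ∃ F, memHpD p F ∧ ∀ g, Smooth1PeriodicC g → Se F g = u g) := by
  obtain ⟨S, hS⟩ := csS_exists (Y := Y) (1/2) (1/2)
  refine ⟨S, fun n x g hg => ?_, 1, 4 ^ (1/p), one_pos, cs_four hp, fun F hF => ?_,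
    fun u hu hev => ?_⟩
  · obtain ⟨h1, h2⟩ := cs_monomial n x
    rw [hS _ h1, h2, csT_monomial _ _ _ _ hg, cs_cos g hg]
  · have hW := cs_mem_W hp hp1 hF
    have hup : qHpT p (csT (1/2) (1/2) (csA F)) ≤ 4 ^ (1/p) * qHpD p F := by
      refine cs_upper hp hp1 hF.1.continuousOn (fun r t hr hr1 => ?_) (fun r t hr hr1 => ?_)
      · rw [csT_p _ _ hW hr hr1]
        exact cs_norm_lin cs_half_le cs_half_le _ _
      · rw [cs_even_q hW hr hr1]
        exact cs_norm_lin cs_nI_half_le cs_I_half_le _ _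
    rw [hS F hW]
    refine ⟨⟨csT_distr _ _ hW.2, hup.trans_lt (ENNReal.mul_lt_top (cs_four hp)
      (cs_qHpD_lt hp hF))⟩, fun g hg => csT_flip _ _ hg, ?_, hup⟩
    rw [one_mul]
    exact cs_lower hp hp1 (cs_even_low hW)
  · obtain ⟨k, C, hC⟩ := cs_distr_bound hu.1
    have hflip : ∀ n : ℤ, u (csE (-n)) = u (csE n) := fun n => by
      rw [← csE_flip]; exact hev _ (csE_smooth n)
    obtain ⟨F, hF, -, hFu⟩ := cs_surj hu.1 (1/2) (1/2)
      (fun n => (if n = 0 then 1 else 2 : ℂ) • u (csE n)) ⟨k, 2 * C, fun n => by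
        rw [norm_smul, mul_assoc]
        refine mul_le_mul ?_ (hC n) (norm_nonneg _) (by norm_num)
        split_ifs <;> simp⟩ (fun n hn => by
        rw [hflip]
        simp [hn, smul_smul]) (by
        norm_num)
    refine ⟨F, ?_, fun g hg => by rw [hS F hF]; exact hFu g hg⟩
    exact cs_mem_of_T hp hp1 hF hu hFu (cs_even_low hF)

theorem cs_main_odd (p : ℝ) (hp : 0 < p) (hp1 : p ≤ 1) :
    ∃ So : (ℂ → Y) →ₗ[ℂ] ((ℝ → ℂ) → Y),
      (∀ (n : ℕ) (x : Y) (g : ℝ → ℂ), Smooth1PeriodicC g →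
        So (fun z => z ^ (n + 1) • x) g =
          (∫ t in I₀, g t * (Real.sin (2 * Real.pi * (n + 1) * t) : ℂ)) • x) ∧
      ∃ c C : ℝ≥0∞, 0 < c ∧ C < ⊤ ∧
        (∀ F, memHpD p F → F 0 = 0 → memHpT p (So F) ∧ IsOddDistr (So F) ∧
          c * qHpD p F ≤ qHpT p (So F) ∧ qHpT p (So F) ≤ C * qHpD p F) ∧
        (∀ u, memHpT p u → IsOddDistr u →
          ∃ F, memHpD p F ∧ F 0 = 0 ∧ ∀ g, Smooth1PeriodicC g → So F g = u g) := by
  obtain ⟨S, hS⟩ := csS_exists (Y := Y) (-Complex.I/2) (Complex.I/2)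
  refine ⟨S, fun n x g hg => ?_, 1, 4 ^ (1/p), one_pos, cs_four hp, fun F hF h0 => ?_,
    fun u hu hod => ?_⟩
  · obtain ⟨h1, h2⟩ := cs_monomial (n+1) x
    have h3 := cs_sin g hg (n+1)
    rw [Nat.cast_add_one (R := ℝ)] at h3
    rw [hS _ h1, h2, csT_monomial _ _ _ _ hg, h3]
  · have hW := cs_mem_W hp hp1 hF
    have hup : qHpT p (csT (-Complex.I/2) (Complex.I/2) (csA F)) ≤ 4 ^ (1/p) * qHpD p F := by
      refine cs_upper hp hp1 hF.1.continuousOn (fun r t hr hr1 => ?_) (fun r t hr hr1 => ?_)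
      · rw [cs_odd_p hW hr hr1]
        exact cs_norm_lin cs_nI_half_le cs_I_half_le _ _
      · rw [cs_odd_q hW h0 hr hr1]
        exact cs_norm_lin (by norm_num) (by norm_num) _ _
    rw [hS F hW]
    refine ⟨⟨csT_distr _ _ hW.2, hup.trans_lt (ENNReal.mul_lt_top (cs_four hp)
      (cs_qHpD_lt hp hF))⟩, fun g hg => ?_, ?_, hup⟩
    · rw [csT_flip _ _ hg]
      refine (csT_hasSum _ _ hW.2 hg).unique ?_
      convert (csT_hasSum (-Complex.I/2) (Complex.I/2) hW.2 hg).neg using 1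
      funext n
      simp only [csv]
      module
    · rw [one_mul]
      exact cs_lower hp hp1 (cs_odd_low hW h0)
  · obtain ⟨k, C, hC⟩ := cs_distr_bound hu.1
    have hflip : ∀ n : ℤ, u (csE (-n)) = -u (csE n) := fun n => by
      rw [← csE_flip]; exact hod _ (csE_smooth n)
    have hz : u (csE 0) = 0 := by
      have h := hflip 0
      rw [neg_zero] at h
      have h2 : (2:ℂ) • u (csE 0) = 0 := by
        rw [two_smul]; nth_rewrite 1 [h]; simp
      exact (smul_eq_zero.1 h2).resolve_left two_ne_zero
    obtain ⟨F, hF, hF0, hFu⟩ := cs_surj hu.1 (-Complex.I/2) (Complex.I/2)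
      (fun n => (-2 * Complex.I : ℂ) • u (csE n)) ⟨k, 2 * C, fun n => by
        rw [norm_smul, mul_assoc]
        refine mul_le_mul ?_ (hC n) (norm_nonneg _) (by norm_num)
        simp⟩ (fun n hn => by
        rw [hflip, smul_smul, smul_smul,
          show -Complex.I/2 * (-2 * Complex.I) = -1 by linear_combination Complex.I_mul_I,
          show Complex.I/2 * (-2 * Complex.I) = 1 by linear_combination -Complex.I_mul_I]
        simp) (by
        simp [hz])
    have hF0' : F 0 = 0 := by rw [hF0]; simp [hz]
    refine ⟨F, ?_, hF0', fun g hg => by rw [hS F hF]; exact hFu g hg⟩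
    exact cs_mem_of_T hp hp1 hF hu hFu (cs_odd_low hF hF0')

end final

theorem cosine_sine_isomorphisms {X Y : Type*}
    [NormedAddCommGroup X] [NormedSpace ℝ X] [CompleteSpace X]
    [NormedAddCommGroup Y] [NormedSpace ℂ Y] [CompleteSpace Y]
    (ι : X →ₗ[ℝ] Y) (ReY ImY : Y →ₗ[ℝ] X)
    (hdecomp : ∀ y : Y, y = ι (ReY y) + Complex.I • ι (ImY y))
    (hReι : ∀ x, ReY (ι x) = x) (hImι : ∀ x, ImY (ι x) = 0)
    (hbd : ∃ Cb : ℝ, 0 < Cb ∧ (∀ y, ‖ReY y‖ ≤ Cb * ‖y‖) ∧ (∀ y, ‖ImY y‖ ≤ Cb * ‖y‖) ∧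
      ∀ x, ‖ι x‖ ≤ Cb * ‖x‖)
    (p : ℝ) (hp : 0 < p) (hp1 : p ≤ 1) :
    -- (i) the cosine map `S_e : H_p(𝔻,Y) ≃ H_{p,e}(𝕋,Y)`
    (∃ Se : (ℂ → Y) →ₗ[ℂ] ((ℝ → ℂ) → Y),
      (∀ (n : ℕ) (x : Y) (g : ℝ → ℂ), Smooth1PeriodicC g →
        Se (fun z => z ^ n • x) g =
          (∫ t in I₀, g t * (Real.cos (2 * Real.pi * n * t) : ℂ)) • x) ∧
      ∃ c C : ℝ≥0∞, 0 < c ∧ C < ⊤ ∧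
        (∀ F, memHpD p F → memHpT p (Se F) ∧ IsEvenDistr (Se F) ∧
          c * qHpD p F ≤ qHpT p (Se F) ∧ qHpT p (Se F) ≤ C * qHpD p F) ∧
        (∀ u, memHpT p u → IsEvenDistr u →
          ∃ F, memHpD p F ∧ ∀ g, Smooth1PeriodicC g → Se F g = u g)) ∧
    -- (ii) the sine map `S_o : H_{p,0}(𝔻,Y) ≃ H_{p,o}(𝕋,Y)`
    (∃ So : (ℂ → Y) →ₗ[ℂ] ((ℝ → ℂ) → Y),
      (∀ (n : ℕ) (x : Y) (g : ℝ → ℂ), Smooth1PeriodicC g →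
        So (fun z => z ^ (n + 1) • x) g =
          (∫ t in I₀, g t * (Real.sin (2 * Real.pi * (n + 1) * t) : ℂ)) • x) ∧
      ∃ c C : ℝ≥0∞, 0 < c ∧ C < ⊤ ∧
        (∀ F, memHpD p F → F 0 = 0 → memHpT p (So F) ∧ IsOddDistr (So F) ∧
          c * qHpD p F ≤ qHpT p (So F) ∧ qHpT p (So F) ≤ C * qHpD p F) ∧
        (∀ u, memHpT p u → IsOddDistr u →
          ∃ F, memHpD p F ∧ F 0 = 0 ∧ ∀ g, Smooth1PeriodicC g → So F g = u g)) := by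
  exact ⟨cs_main_even p hp hp1, cs_main_odd p hp hp1⟩

end
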